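/- arXiv:1202.4327 — 2 statements merged into one kernel-verified Lean document; each statement's English description precedes it below -/
import Mathlib

section
/- Let ν₂(h) := (2·6^{1/3}·√π/Γ(1/3)²)·e^{-8h³/9}·U(1/6, 2/3; 8h³/9) for h ≥ 0. Then lim_{h→∞} h^{-3}·log(∫_h^∞ ν₂(χ) dχ) = -8/9. Since ν₂ is the density of the height H(1) of the true self-repelling motion at time 1, this says lim_{h→∞} h^{-3}·log P(H(1) > h) = -8/9. -/
open Real MeasureTheory Set Filter Topology

noncomputable section

/-- Confluent hypergeometric function of the second kind (Tricomi function),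
via its integral representation. -/
def tricomiU (a b z : ℝ) : ℝ :=
  (1 / Real.Gamma a) * ∫ s in Ioi (0:ℝ), Real.exp (-z * s) * s ^ (a - 1) * (1 + s) ^ (b - a - 1)

/-- The density of the height `H(1)` of the TSRM at time `1`. -/
def nu2 (h : ℝ) : ℝ :=
  (2 * (6:ℝ) ^ ((1:ℝ)/3) * Real.sqrt π / (Real.Gamma (1/3)) ^ 2) *
    Real.exp (-8 * h ^ 3 / 9) * tricomiU (1/6) (2/3) (8 * h ^ 3 / 9)

/-!
Watson's lemma: substituting `s = t / z` turns `z ^ a * U(a, b; z)` into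
`Γ(a)⁻¹ ∫₀^∞ e⁻ᵗ t^(a-1) (1 + t/z)^(b-a-1) dt`, which tends to `1` by dominated convergence. Hence
`U` contributes nothing on the exponential scale and `log ν₂(h) ∼ -8h³/9`. Laplace's principle
transfers such a rate `r < 0` from a function to its tail integral. For the lower bound, the tail
dominates the integral over `(h, h + 1]`, and `(h + 1)ᵖ ∼ hᵖ`. For the upper bound, if
`r < s < t < 0` then `s xᵖ ≤ t hᵖ + (s - t) xᵖ` for `x ≥ h`, so that `exp (t hᵖ)` factors out and
leaves the tail of a convergent integral.
-/

section LaplaceTail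

variable {p r s t : ℝ}

lemma tendsto_log_div_iff {α : Type*} {l : Filter α} {g φ : α → ℝ} (hg : ∀ᶠ x in l, 0 < g x)
    (hφ : ∀ᶠ x in l, 0 < φ x) :
    Tendsto (fun x => log (g x) / φ x) l (𝓝 r) ↔
      (∀ s < r, ∀ᶠ x in l, exp (s * φ x) < g x) ∧ ∀ s > r, ∀ᶠ x in l, g x < exp (s * φ x) := by
  refine tendsto_order.trans (and_congr ?_ ?_) <;>
    refine forall₂_congr fun s _ => eventually_congr ?_ <;>
    filter_upwards [hg, hφ] with x hgx hφx
  · rw [lt_div_iff₀ hφx, lt_log_iff_exp_lt hgx]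
  · rw [div_lt_iff₀ hφx, log_lt_iff_lt_exp hgx]

lemma integrableOn_exp_mul_rpow (hp : 0 < p) (hs : s < 0) :
    IntegrableOn (fun x : ℝ => exp (s * x ^ p)) (Ioi 0) := by
  simpa using integrableOn_rpow_mul_exp_neg_mul_rpow (s := 0) (by norm_num) hp (neg_pos.2 hs)

lemma tendsto_add_one_rpow_div_rpow (p : ℝ) :
    Tendsto (fun h : ℝ => (h + 1) ^ p / h ^ p) atTop (𝓝 1) := by
  have hbase : Tendsto (fun h : ℝ => 1 + h⁻¹) atTop (𝓝 1) := by
    simpa using tendsto_inv_atTop_zero.const_add (1 : ℝ)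
  have hpow : Tendsto (fun h : ℝ => (1 + h⁻¹) ^ p) atTop (𝓝 1) := by
    simpa using hbase.rpow_const (Or.inl one_ne_zero)
  refine hpow.congr' ?_
  filter_upwards [eventually_gt_atTop 0] with h hh
  rw [← div_rpow (by positivity) hh.le, add_div, div_self hh.ne', one_div]

variable {E : Type*} [NormedAddCommGroup E]

lemma integrableAtFilter_atTop_of_norm_le_exp {f : ℝ → E} (hp : 0 < p) (hs : s < 0)
    (hfm : AEStronglyMeasurable f) (hf : ∀ᶠ x in atTop, ‖f x‖ ≤ exp (s * x ^ p)) :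
    IntegrableAtFilter f atTop := by
  obtain ⟨a, ha, hfa⟩ := ((eventually_ge_atTop 0).and (eventually_forall_ge_atTop.2 hf)).exists
  refine ⟨Ioi a, Ioi_mem_atTop a, ?_⟩
  refine ((integrableOn_exp_mul_rpow hp hs).mono_set (Ioi_subset_Ioi ha)).mono' hfm.restrict ?_
  exact ae_restrict_of_forall_mem measurableSet_Ioi fun x hx => hfa x (le_of_lt hx)

lemma eventually_norm_integral_Ioi_lt_exp [NormedSpace ℝ E] {f : ℝ → E} (hp : 0 < p) (hst : s < t)
    (ht : t ≤ 0) (hf : ∀ᶠ x in atTop, ‖f x‖ ≤ exp (s * x ^ p)) :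
    ∀ᶠ h in atTop, ‖∫ x in Ioi h, f x‖ < exp (t * h ^ p) := by
  have htail : Tendsto (fun h : ℝ => ∫ x in Ioi h, exp ((s - t) * x ^ p)) atTop (𝓝 0) :=
    tendsto_integral_Ioi_zero tendsto_id
  filter_upwards [eventually_ge_atTop 0, eventually_forall_ge_atTop.2 hf,
    htail.eventually_lt_const one_pos] with h hh hfh hlt
  have hsplit : ∀ x ∈ Ioi h, ‖f x‖ ≤ exp (t * h ^ p) * exp ((s - t) * x ^ p) := fun x hx => by
    have hpow : h ^ p ≤ x ^ p := rpow_le_rpow hh (le_of_lt hx) hp.le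
    refine (hfh x (le_of_lt hx)).trans ?_
    rw [← exp_add, exp_le_exp]
    linarith [mul_le_mul_of_nonpos_left hpow ht]
  have hint : IntegrableOn (fun x => exp ((s - t) * x ^ p)) (Ioi h) :=
    (integrableOn_exp_mul_rpow hp (sub_neg.2 hst)).mono_set (Ioi_subset_Ioi hh)
  calc ‖∫ x in Ioi h, f x‖
      ≤ ∫ x in Ioi h, exp (t * h ^ p) * exp ((s - t) * x ^ p) :=
        norm_integral_le_of_norm_le (hint.const_mul _)
          (ae_restrict_of_forall_mem measurableSet_Ioi hsplit)
    _ = exp (t * h ^ p) * ∫ x in Ioi h, exp ((s - t) * x ^ p) := integral_const_mul _ _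
    _ < exp (t * h ^ p) := mul_lt_of_lt_one_right (exp_pos _) hlt

lemma exp_le_integral_Ioi {f : ℝ → ℝ} {h : ℝ} (hp : 0 ≤ p) (ht : t ≤ 0) (hh : 0 ≤ h)
    (hint : IntegrableOn f (Ioi h)) (hf : ∀ x ≥ h, exp (t * x ^ p) ≤ f x) :
    exp (t * (h + 1) ^ p) ≤ ∫ x in Ioi h, f x := by
  have hconst : ∀ x ∈ Ioc h (h + 1), exp (t * (h + 1) ^ p) ≤ f x := fun x hx => by
    have hpow : x ^ p ≤ (h + 1) ^ p := rpow_le_rpow (hh.trans hx.1.le) hx.2 hp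
    exact (exp_le_exp.2 (mul_le_mul_of_nonpos_left hpow ht)).trans (hf x hx.1.le)
  have hnonneg : ∀ x ∈ Ioi h, 0 ≤ f x := fun x hx => (exp_pos _).le.trans (hf x (le_of_lt hx))
  calc exp (t * (h + 1) ^ p) = ∫ _ in Ioc h (h + 1), exp (t * (h + 1) ^ p) := by simp
    _ ≤ ∫ x in Ioc h (h + 1), f x :=
        setIntegral_mono_on (integrableOn_const (by simp)) (hint.mono_set Ioc_subset_Ioi_self)
          measurableSet_Ioc hconst
    _ ≤ ∫ x in Ioi h, f x :=
        setIntegral_mono_set hint (ae_restrict_of_forall_mem measurableSet_Ioi hnonneg)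
          Ioc_subset_Ioi_self.eventuallyLE

lemma eventually_exp_lt_integral_Ioi {f : ℝ → ℝ} (hp : 0 ≤ p) (hst : s < t) (ht : t ≤ 0)
    (hint : IntegrableAtFilter f atTop) (hf : ∀ᶠ x in atTop, exp (t * x ^ p) ≤ f x) :
    ∀ᶠ h in atTop, exp (s * h ^ p) < ∫ x in Ioi h, f x := by
  have hshift : Tendsto (fun h : ℝ => t * ((h + 1) ^ p / h ^ p)) atTop (𝓝 t) := by
    simpa using (tendsto_add_one_rpow_div_rpow p).const_mul t
  obtain ⟨a, ha⟩ := integrableAtFilter_atTop_iff.1 hint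
  filter_upwards [eventually_gt_atTop 0, eventually_ge_atTop a, eventually_forall_ge_atTop.2 hf,
    hshift.eventually_const_lt hst] with h hh hah hfh hlt
  refine lt_of_lt_of_le (exp_lt_exp.2 ?_) (exp_le_integral_Ioi hp ht hh.le
    (ha.mono_set fun x hx => hah.trans (le_of_lt hx)) hfh)
  rwa [← mul_div_assoc, lt_div_iff₀ (rpow_pos_of_pos hh p)] at hlt

theorem tendsto_log_integral_Ioi_div_rpow {f : ℝ → ℝ} (hp : 0 < p) (hr : r < 0)
    (hfm : AEStronglyMeasurable f) (hpos : ∀ᶠ x in atTop, 0 < f x)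
    (hf : Tendsto (fun x => log (f x) / x ^ p) atTop (𝓝 r)) :
    Tendsto (fun h => log (∫ x in Ioi h, f x) / h ^ p) atTop (𝓝 r) := by
  have hpow : ∀ᶠ x : ℝ in atTop, 0 < x ^ p :=
    (eventually_gt_atTop 0).mono fun x hx => rpow_pos_of_pos hx p
  obtain ⟨hlower, hupper⟩ := (tendsto_log_div_iff hpos hpow).1 hf
  have hnorm : ∀ s > r, ∀ᶠ x in atTop, ‖f x‖ ≤ exp (s * x ^ p) := fun s hs => by
    filter_upwards [hpos, hupper s hs] with x hx hlt
    exact (norm_of_nonneg hx.le).trans_le hlt.le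
  have hint : IntegrableAtFilter f atTop := by
    obtain ⟨s, hrs, hs⟩ := exists_between hr
    exact integrableAtFilter_atTop_of_norm_le_exp hp hs hfm (hnorm s hrs)
  have htail_lower : ∀ s < r, ∀ᶠ h in atTop, exp (s * h ^ p) < ∫ x in Ioi h, f x := fun s hs => by
    obtain ⟨t, hst, htr⟩ := exists_between hs
    exact eventually_exp_lt_integral_Ioi hp.le hst (htr.trans hr).le hint
      ((hlower t htr).mono fun _ => le_of_lt)
  have htail_pos : ∀ᶠ h in atTop, 0 < ∫ x in Ioi h, f x :=
    (htail_lower (r - 1) (sub_one_lt r)).mono fun _ => (exp_pos _).trans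
  refine (tendsto_log_div_iff htail_pos hpow).2 ⟨htail_lower, fun s hs => ?_⟩
  obtain ⟨u, hru, hu⟩ := exists_between (lt_min hs hr)
  obtain ⟨hus, hu0⟩ := lt_min_iff.1 hu
  obtain ⟨v, hrv, hvu⟩ := exists_between hru
  filter_upwards [eventually_norm_integral_Ioi_lt_exp hp hvu hu0.le (hnorm v hrv), hpow]
    with h hlt hh
  calc ∫ x in Ioi h, f x ≤ ‖∫ x in Ioi h, f x‖ := le_norm_self _
    _ < exp (u * h ^ p) := hlt
    _ ≤ exp (s * h ^ p) := by gcongr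

end LaplaceTail

section Tricomi

variable {a : ℝ}

lemma one_add_rpow_le {c t : ℝ} (hc : 0 ≤ c) (ht : 0 ≤ t) :
    (1 + t) ^ c ≤ 2 ^ c * (1 + t ^ c) := by
  have hmax : (1 + t) ^ c ≤ 2 ^ c * max 1 t ^ c := by
    rw [← mul_rpow (by positivity) (by positivity)]
    gcongr
    linarith [le_max_left 1 t, le_max_right 1 t]
  refine hmax.trans ?_
  gcongr
  rcases le_total t 1 with h | h
  · simp [max_eq_left h, rpow_nonneg ht]
  · simp [max_eq_right h]

lemma integrableOn_exp_neg_mul_rpow_mul_one_add_rpow {c : ℝ} (ha : 0 < a) (hc : 0 ≤ c) :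
    IntegrableOn (fun t : ℝ => exp (-t) * t ^ (a - 1) * (1 + t) ^ c) (Ioi 0) := by
  have hdom : IntegrableOn (fun t : ℝ =>
      2 ^ c * (exp (-t) * t ^ (a - 1) + exp (-t) * t ^ (a + c - 1))) (Ioi 0) :=
    ((GammaIntegral_convergent ha).add (GammaIntegral_convergent (by positivity))).const_mul _
  refine hdom.mono' (Measurable.aestronglyMeasurable (by fun_prop)) ?_
  refine ae_restrict_of_forall_mem measurableSet_Ioi fun t ht => ?_
  have ht : 0 < t := ht
  rw [norm_of_nonneg (by positivity)]
  calc exp (-t) * t ^ (a - 1) * (1 + t) ^ c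
      ≤ exp (-t) * t ^ (a - 1) * (2 ^ c * (1 + t ^ c)) := by
        gcongr
        exact one_add_rpow_le hc ht.le
    _ = 2 ^ c * (exp (-t) * t ^ (a - 1) + exp (-t) * t ^ (a + c - 1)) := by
        rw [add_sub_right_comm, rpow_add ht]
        ring

lemma tendsto_integral_exp_neg_mul_rpow_mul_one_add_div_rpow (ha : 0 < a) (c : ℝ) :
    Tendsto (fun z : ℝ => ∫ t in Ioi 0, exp (-t) * t ^ (a - 1) * (1 + t / z) ^ c) atTop
      (𝓝 (Gamma a)) := by
  rw [Gamma_eq_integral ha]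
  refine tendsto_integral_filter_of_dominated_convergence _
    (.of_forall fun z => Measurable.aestronglyMeasurable (by fun_prop)) ?_
    (integrableOn_exp_neg_mul_rpow_mul_one_add_rpow ha (abs_nonneg c)) ?_
  · filter_upwards [eventually_ge_atTop 1] with z hz
    refine ae_restrict_of_forall_mem measurableSet_Ioi fun t ht => ?_
    have ht : 0 < t := ht
    have hbase : 1 ≤ 1 + t / z := le_add_of_nonneg_right (by positivity)
    rw [norm_of_nonneg (by positivity)]
    gcongr
    calc (1 + t / z) ^ c ≤ (1 + t / z) ^ |c| := rpow_le_rpow_of_exponent_le hbase (le_abs_self c)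
      _ ≤ (1 + t) ^ |c| := by
        gcongr
        exact div_le_self ht.le hz
  · refine .of_forall fun t => ?_
    have hbase : Tendsto (fun z : ℝ => 1 + t / z) atTop (𝓝 1) := by
      simpa using (tendsto_const_nhds.div_atTop tendsto_id).const_add (1 : ℝ)
    simpa using (hbase.rpow_const (Or.inl one_ne_zero)).const_mul (exp (-t) * t ^ (a - 1))

lemma rpow_mul_tricomiU {z : ℝ} (a b : ℝ) (hz : 0 < z) :
    z ^ a * tricomiU a b z =
      (1 / Gamma a) * ∫ t in Ioi 0, exp (-t) * t ^ (a - 1) * (1 + t / z) ^ (b - a - 1) := by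
  have hsubst := integral_comp_mul_left_Ioi
    (fun t => exp (-t) * t ^ (a - 1) * (1 + t / z) ^ (b - a - 1)) 0 hz
  rw [mul_zero, smul_eq_mul, eq_inv_mul_iff_mul_eq₀ hz.ne', ← integral_const_mul] at hsubst
  rw [tricomiU, ← hsubst, mul_left_comm, ← integral_const_mul]
  congr 1
  refine setIntegral_congr_fun measurableSet_Ioi fun s hs => ?_
  simp only [mul_div_cancel_left₀ s hz.ne', mul_rpow hz.le (le_of_lt hs), rpow_sub_one hz.ne',
    neg_mul]
  field_simp

theorem tendsto_rpow_mul_tricomiU (ha : 0 < a) (b : ℝ) :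
    Tendsto (fun z => z ^ a * tricomiU a b z) atTop (𝓝 1) := by
  have h := (tendsto_integral_exp_neg_mul_rpow_mul_one_add_div_rpow ha (b - a - 1)).const_mul
    (1 / Gamma a)
  rw [one_div_mul_cancel (Gamma_pos_of_pos ha).ne'] at h
  refine h.congr' ?_
  filter_upwards [eventually_gt_atTop 0] with z hz
  exact (rpow_mul_tricomiU a b hz).symm

lemma eventually_tricomiU_pos (ha : 0 < a) (b : ℝ) : ∀ᶠ z in atTop, 0 < tricomiU a b z := by
  filter_upwards [(tendsto_rpow_mul_tricomiU ha b).eventually_const_lt one_pos,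
    eventually_gt_atTop 0] with z hpos hz
  exact pos_of_mul_pos_right hpos (rpow_nonneg hz.le a)

lemma tendsto_log_tricomiU_div (ha : 0 < a) (b : ℝ) :
    Tendsto (fun z => log (tricomiU a b z) / z) atTop (𝓝 0) := by
  have hlog : Tendsto (fun z => log (z ^ a * tricomiU a b z) / z) atTop (𝓝 0) :=
    ((tendsto_rpow_mul_tricomiU ha b).log one_ne_zero).div_atTop tendsto_id
  have hlog_div : Tendsto (fun z : ℝ => log z / z) atTop (𝓝 0) :=
    isLittleO_log_id_atTop.tendsto_div_nhds_zero
  have h := hlog.sub (hlog_div.const_mul a)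
  rw [mul_zero, sub_zero] at h
  refine h.congr' ?_
  filter_upwards [eventually_tricomiU_pos ha b, eventually_gt_atTop 0] with z hU hz
  rw [log_mul (rpow_pos_of_pos hz a).ne' hU.ne', log_rpow hz]
  ring

lemma measurable_tricomiU (a b : ℝ) : Measurable (tricomiU a b) := by
  have h : StronglyMeasurable (fun q : ℝ × ℝ =>
      exp (-q.1 * q.2) * q.2 ^ (a - 1) * (1 + q.2) ^ (b - a - 1)) :=
    Measurable.stronglyMeasurable (by fun_prop)
  exact (h.integral_prod_right (ν := volume.restrict (Ioi (0 : ℝ)))).measurable.const_mul _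

end Tricomi

lemma measurable_nu2 : Measurable nu2 := by
  have := measurable_tricomiU (1 / 6) (2 / 3)
  unfold nu2
  fun_prop

lemma tendsto_eight_mul_cube_div_nine_atTop :
    Tendsto (fun h : ℝ => 8 * h ^ 3 / 9) atTop atTop :=
  ((tendsto_pow_atTop three_ne_zero).const_mul_atTop (by norm_num)).atTop_div_const (by norm_num)

lemma eventually_tricomiU_cube_pos {a : ℝ} (ha : 0 < a) (b : ℝ) :
    ∀ᶠ h : ℝ in atTop, 0 < tricomiU a b (8 * h ^ 3 / 9) :=
  tendsto_eight_mul_cube_div_nine_atTop.eventually (eventually_tricomiU_pos ha b)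

lemma nu2_prefactor_pos : 0 < 2 * (6 : ℝ) ^ ((1 : ℝ) / 3) * √π / Gamma (1 / 3) ^ 2 := by
  have : 0 < Gamma (1 / 3) := Gamma_pos_of_pos (by norm_num)
  positivity

lemma eventually_nu2_pos : ∀ᶠ h in atTop, 0 < nu2 h :=
  (eventually_tricomiU_cube_pos (by norm_num) (2 / 3)).mono fun _ hU =>
    mul_pos (mul_pos nu2_prefactor_pos (exp_pos _)) hU

lemma tendsto_log_nu2_div_cube : Tendsto (fun h => log (nu2 h) / h ^ 3) atTop (𝓝 (-8 / 9)) := by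
  have ha : (0 : ℝ) < 1 / 6 := by norm_num
  have hconst : Tendsto (fun h : ℝ =>
      log (2 * (6 : ℝ) ^ ((1 : ℝ) / 3) * √π / Gamma (1 / 3) ^ 2) / h ^ 3) atTop (𝓝 0) :=
    tendsto_const_nhds.div_atTop (tendsto_pow_atTop three_ne_zero)
  have hU : Tendsto (fun h : ℝ =>
      log (tricomiU (1 / 6) (2 / 3) (8 * h ^ 3 / 9)) / (8 * h ^ 3 / 9)) atTop (𝓝 0) :=
    (tendsto_log_tricomiU_div ha (2 / 3)).comp tendsto_eight_mul_cube_div_nine_atTop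
  have hsum := (hconst.add_const (-8 / 9)).add (hU.const_mul (8 / 9))
  rw [zero_add, mul_zero, add_zero] at hsum
  refine hsum.congr' ?_
  filter_upwards [eventually_gt_atTop 0, eventually_tricomiU_cube_pos ha (2 / 3)] with h hh hUpos
  rw [nu2, log_mul (mul_pos nu2_prefactor_pos (exp_pos _)).ne' hUpos.ne',
    log_mul nu2_prefactor_pos.ne' (exp_ne_zero _), log_exp]
  field_simp

/-- tail asymptotics of the height of the TSRM:
`lim_{h→∞} h⁻³·log P(H(1) > h) = -8/9`, where `P(H(1) > h) = ∫_h^∞ ν₂`. -/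
theorem stmt18 :
    Tendsto (fun h : ℝ => (h ^ 3)⁻¹ * Real.log (∫ χ in Ioi h, nu2 χ))
      atTop (𝓝 (-8/9)) := by
  have hlog : Tendsto (fun h => log (nu2 h) / h ^ (3 : ℝ)) atTop (𝓝 (-8 / 9)) := by
    simpa only [rpow_ofNat] using tendsto_log_nu2_div_cube
  have htail := tendsto_log_integral_Ioi_div_rpow three_pos (by norm_num)
    measurable_nu2.aestronglyMeasurable eventually_nu2_pos hlog
  simpa only [rpow_ofNat, div_eq_inv_mul] using htail
end
end

section
/- Let u be the normalized Airy function, 0 < δ'₁ < δ'₂ < ... the increasing enumeration of the zeros of h ↦ u'(-h) on (0,∞), pₖ := (u'(0)²/2)·(δ'ₖ)^{-4}, f_{2/3} the Mittag-Leffler density of index 2/3, and ν₁(x) := ∑_{k=1}^∞ pₖ·(δ'ₖ/2)·f_{2/3}(δ'ₖ·|x|) for x ∈ ℝ. Then lim_{x→∞} x^{-3}·log(∫_x^∞ ν₁(y) dy) = -(4/27)·(δ'₁)³. Since ν₁ is the density of the position X(1) of the true self-repelling motion at time 1, this says lim_{x→∞} x^{-3}·log P(X(1) > x) = -(4/27)·(δ'₁)³.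 -/
open Real MeasureTheory Set Filter Topology

noncomputable section

/-- The Mittag-Leffler density of index `2/3`, defined by its entire power series. -/
def mittagLeffler23 (x : ℝ) : ℝ :=
  (1 / π) * ∑' k : ℕ,
    (Real.sin (2 * π * ((k : ℝ) + 1) / 3) * Real.Gamma (2 * ((k : ℝ) + 1) / 3) /
      (Nat.factorial k : ℝ)) * (-x) ^ k

/-!
On the scale of `x³` only the smallest zero matters: if `log (f x) ~ -κ xⁿ`, then a mixture
`∑ wᵢ f (δᵢ x)` of rescalings, as well as its tail integral, decays at the rate `κ (min δᵢ)ⁿ`,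
provided that `∑ wᵢ exp (-t δᵢⁿ)` converges for all `t > 0`. For the zeros `δₖ` of the derivative
of an Airy function this convergence follows from `2 δₖ₊₁ (δₖ₊₁ - δₖ)² ≥ 1`, which makes `δₖ³` grow
at least linearly: between two zeros of `u'` there is a zero of `u`, and on a short interval
`u'' = 2xu` leaves no room for both.

The rate `4 / 27` of `f_{2/3}` comes from the two-term recursion of its Taylor coefficients,
i.e. `f'' = -(4/9) x² f' - (10/9) x f`. Solving this equation gives
`f (3y) = √3 / (2π) * exp (-2y³) * (G_{2/3} (y⁶) + y * G_{1/3} (y⁶))` with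
`G_s a = ∫₀^∞ v ^ (s - 1) * exp (-v - a / v) dv`, and Laplace's method for `G_s`, where the
exponent `v + a / v` is least at `v = √a`, contributes another `exp (-2y³)`, so that
`f (3y)` decays like `exp (-4y³)`.
-/

/-! ### Decay rates on the logarithmic scale -/

/-- `f` is eventually positive and `log (f x) ~ -κ * x ^ n` as `x → ∞`: the decay of the tail on
the logarithmic scale of large deviations. Positivity is part of the notion because `Real.log` is
`log |·|`, and the case `κ = 0` says that `f` is subexponential on the scale `x ^ n`. -/
structure HasExpDecay (f : ℝ → ℝ) (n : ℕ) (κ : ℝ) : Prop where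
  eventually_pos : ∀ᶠ x in atTop, 0 < f x
  tendsto_log : Tendsto (fun x ↦ (x ^ n)⁻¹ * log (f x)) atTop (𝓝 (-κ))

namespace HasExpDecay

variable {f : ℝ → ℝ} {n : ℕ} {κ : ℝ}

lemma eventually_le_exp (h : HasExpDecay f n κ) {a : ℝ} (ha : a < κ) :
    ∀ᶠ x in atTop, f x ≤ exp (-(a * x ^ n)) := by
  filter_upwards [h.tendsto_log.eventually_lt_const (neg_lt_neg ha), h.eventually_pos,
    eventually_gt_atTop 0] with x hlog hfx hx
  rw [inv_mul_lt_iff₀ (by positivity)] at hlog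
  exact (log_le_iff_le_exp hfx).mp (by linarith)

lemma eventually_exp_le (h : HasExpDecay f n κ) {b : ℝ} (hb : κ < b) :
    ∀ᶠ x in atTop, exp (-(b * x ^ n)) ≤ f x := by
  filter_upwards [h.tendsto_log.eventually_const_lt (neg_lt_neg hb), h.eventually_pos,
    eventually_gt_atTop 0] with x hlog hfx hx
  rw [lt_inv_mul_iff₀ (by positivity)] at hlog
  exact (le_log_iff_exp_le hfx).mp (by linarith)

end HasExpDecay

lemma tendsto_inv_pow_mul_log_mul_exp {n : ℕ} (hn : n ≠ 0) {C : ℝ} (hC : C ≠ 0) (a : ℝ) :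
    Tendsto (fun x : ℝ ↦ (x ^ n)⁻¹ * log (C * exp (-(a * x ^ n)))) atTop (𝓝 (-a)) := by
  have hlim : Tendsto (fun x : ℝ ↦ (x ^ n)⁻¹ * log C + -a) atTop (𝓝 (0 * log C + -a)) :=
    ((tendsto_pow_atTop hn).inv_tendsto_atTop.mul_const _).add_const _
  rw [zero_mul, zero_add] at hlim
  refine hlim.congr' ?_
  filter_upwards [eventually_gt_atTop 0] with x hx
  rw [log_mul hC (exp_ne_zero _), log_exp]
  field_simp

lemma hasExpDecay_exp {n : ℕ} (hn : n ≠ 0) (κ : ℝ) :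
    HasExpDecay (fun x ↦ exp (-(κ * x ^ n))) n κ where
  eventually_pos := .of_forall fun _ ↦ exp_pos _
  tendsto_log := by simpa only [one_mul] using tendsto_inv_pow_mul_log_mul_exp hn one_ne_zero κ

lemma hasExpDecay_const {n : ℕ} (hn : n ≠ 0) {c : ℝ} (hc : 0 < c) :
    HasExpDecay (fun _ ↦ c) n 0 where
  eventually_pos := .of_forall fun _ ↦ hc
  tendsto_log := by simpa using tendsto_inv_pow_mul_log_mul_exp hn hc.ne' 0

lemma hasExpDecay_id {n : ℕ} (hn : n ≠ 0) : HasExpDecay (fun x ↦ x) n 0 where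
  eventually_pos := eventually_gt_atTop 0
  tendsto_log := by
    have hlog := (isLittleO_log_rpow_atTop (r := n) (by positivity)).tendsto_div_nhds_zero
    simpa only [rpow_natCast, div_eq_inv_mul, neg_zero] using hlog

namespace HasExpDecay

variable {f g : ℝ → ℝ} {m n : ℕ} {κ κ' : ℝ}

lemma of_bounds (hn : n ≠ 0) (hκ : 0 < κ)
    (upper : ∀ a, 0 < a → a < κ → ∃ C, ∀ᶠ x in atTop, f x ≤ C * exp (-(a * x ^ n)))
    (lower : ∀ b, κ < b → ∃ c > 0, ∀ᶠ x in atTop, c * exp (-(b * x ^ n)) ≤ f x) :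
    HasExpDecay f n κ := by
  have hpos : ∀ᶠ x in atTop, 0 < f x := by
    obtain ⟨c, hc, hlow⟩ := lower (κ + 1) (by linarith)
    filter_upwards [hlow] with x hx using lt_of_lt_of_le (by positivity) hx
  refine ⟨hpos, tendsto_order.mpr ⟨fun l hl ↦ ?_, fun l hl ↦ ?_⟩⟩
  · obtain ⟨b, hκb, hbl⟩ := exists_between (show κ < -l by linarith)
    obtain ⟨c, hc, hlow⟩ := lower b hκb
    filter_upwards [(tendsto_inv_pow_mul_log_mul_exp hn hc.ne' b).eventually_const_lt
      (show l < -b by linarith), hlow, eventually_gt_atTop 0] with x hlx hx hx0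
    exact hlx.trans_le (by gcongr)
  · obtain ⟨a, hla, haκ⟩ := exists_between (show max 0 (-l) < κ from max_lt hκ (by linarith))
    obtain ⟨ha, hla⟩ := max_lt_iff.mp hla
    obtain ⟨C, hup⟩ := upper a ha haκ
    obtain ⟨x₀, hx₀, hfx₀⟩ := (hup.and hpos).exists
    have hC : 0 < C := pos_of_mul_pos_left (hfx₀.trans_le hx₀) (exp_pos _).le
    filter_upwards [(tendsto_inv_pow_mul_log_mul_exp hn hC.ne' a).eventually_lt_const
      (show -a < l by linarith), hup, hpos, eventually_gt_atTop 0] with x hlx hx hfx hx0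
    exact lt_of_le_of_lt (by gcongr) hlx

lemma mul (hf : HasExpDecay f n κ) (hg : HasExpDecay g n κ') :
    HasExpDecay (fun x ↦ f x * g x) n (κ + κ') where
  eventually_pos := by
    filter_upwards [hf.eventually_pos, hg.eventually_pos] with x hfx hgx using mul_pos hfx hgx
  tendsto_log := by
    rw [neg_add]
    refine (hf.tendsto_log.add hg.tendsto_log).congr' ?_
    filter_upwards [hf.eventually_pos, hg.eventually_pos] with x hfx hgx
    rw [log_mul hfx.ne' hgx.ne', mul_add]

lemma add (hn : n ≠ 0) (hκ : 0 < κ) (hf : HasExpDecay f n κ) (hg : HasExpDecay g n κ) :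
    HasExpDecay (fun x ↦ f x + g x) n κ := by
  refine of_bounds hn hκ (fun a _ ha ↦ ⟨2, ?_⟩) fun b hb ↦ ⟨1, one_pos, ?_⟩
  · filter_upwards [hf.eventually_le_exp ha, hg.eventually_le_exp ha] with x hfx hgx
    linarith
  · filter_upwards [hf.eventually_exp_le hb, hg.eventually_pos] with x hfx hgx
    linarith

lemma congr' (hf : HasExpDecay f n κ) (hfg : f =ᶠ[atTop] g) : HasExpDecay g n κ where
  eventually_pos := by
    filter_upwards [hf.eventually_pos, hfg] with x hfx hx
    rwa [← hx]
  tendsto_log := hf.tendsto_log.congr' (by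
    filter_upwards [hfg] with x hx
    rw [hx])

lemma comp_pow (hf : HasExpDecay f n κ) (hm : m ≠ 0) :
    HasExpDecay (fun x ↦ f (x ^ m)) (m * n) κ where
  eventually_pos := (tendsto_pow_atTop hm).eventually hf.eventually_pos
  tendsto_log := by
    simpa only [Function.comp_def, ← pow_mul] using hf.tendsto_log.comp (tendsto_pow_atTop hm)

lemma comp_const_mul (hf : HasExpDecay f n κ) {c : ℝ} (hc : 0 < c) :
    HasExpDecay (fun x ↦ f (c * x)) n (κ * c ^ n) where
  eventually_pos := (tendsto_id.const_mul_atTop hc).eventually hf.eventually_pos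
  tendsto_log := by
    have hlim := (hf.tendsto_log.comp (tendsto_id.const_mul_atTop hc)).const_mul (c ^ n)
    rw [show -(κ * c ^ n) = c ^ n * -κ by ring]
    refine hlim.congr fun x ↦ ?_
    simp only [Function.comp_apply, id_eq, mul_pow]
    field_simp

end HasExpDecay

/-! ### Tail integrals -/

section TailIntegral

variable {f : ℝ → ℝ} {n : ℕ} {a x κ R : ℝ}

lemma sub_le_pow_sub_pow {y : ℝ} (hn : n ≠ 0) (hx : 1 ≤ x) (hxy : x ≤ y) :
    y - x ≤ y ^ n - x ^ n := by
  obtain ⟨k, rfl⟩ := Nat.exists_eq_add_one_of_ne_zero hn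
  have hmul : x * (x ^ k - 1) ≤ y * (y ^ k - 1) := by
    have hpow : 1 ≤ x ^ k := one_le_pow₀ hx
    gcongr
    linarith
  linarith [pow_succ' x k, pow_succ' y k]

lemma exp_neg_mul_pow_le {y : ℝ} (hn : n ≠ 0) (ha : 0 ≤ a) (hx : 1 ≤ x) (hxy : x ≤ y) :
    exp (-(a * y ^ n)) ≤ exp (a * x - a * x ^ n) * exp (-a * y) := by
  rw [← exp_add, exp_le_exp]
  linarith [mul_le_mul_of_nonneg_left (sub_le_pow_sub_pow hn hx hxy) ha]

lemma integral_Ioi_exp_neg_mul_pow_le (hn : n ≠ 0) (ha : 0 < a) (hx : 1 ≤ x)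
    (hf : IntegrableOn f (Ioi x)) (hle : ∀ y ≥ x, f y ≤ exp (-(a * y ^ n))) :
    ∫ y in Ioi x, f y ≤ a⁻¹ * exp (-(a * x ^ n)) := by
  calc ∫ y in Ioi x, f y
    _ ≤ ∫ y in Ioi x, exp (a * x - a * x ^ n) * exp (-a * y) :=
        setIntegral_mono_on hf ((exp_neg_integrableOn_Ioi x ha).const_mul _) measurableSet_Ioi
          fun y hy ↦ (hle y (le_of_lt hy)).trans (exp_neg_mul_pow_le hn ha.le hx (le_of_lt hy))
    _ = a⁻¹ * (exp (a * x - a * x ^ n) * exp (-a * x)) := by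
        rw [integral_const_mul, integral_exp_mul_Ioi (neg_neg_of_pos ha)]
        field_simp
    _ = a⁻¹ * exp (-(a * x ^ n)) := by
        rw [← exp_add]
        ring_nf

lemma eventually_mul_add_one_pow_le (n : ℕ) {b c : ℝ} (hc : 0 < c) (hcb : c < b) :
    ∀ᶠ x : ℝ in atTop, c * (x + 1) ^ n ≤ b * x ^ n := by
  have hlim : Tendsto (fun x : ℝ ↦ (1 + x⁻¹) ^ n) atTop (𝓝 ((1 + 0) ^ n)) :=
    (tendsto_inv_atTop_zero.const_add 1).pow n
  rw [add_zero, one_pow] at hlim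
  filter_upwards [hlim.eventually_lt_const ((one_lt_div hc).mpr hcb), eventually_gt_atTop 0]
    with x hlt hx
  calc c * (x + 1) ^ n = c * ((1 + x⁻¹) ^ n * x ^ n) := by rw [← mul_pow]; field_simp
    _ ≤ c * (b / c * x ^ n) := by gcongr
    _ = b * x ^ n := by field_simp

namespace HasExpDecay

lemma eventually_integrableOn_Ioi (h : HasExpDecay f n κ) (hn : n ≠ 0) (hκ : 0 < κ)
    (hf : AEStronglyMeasurable f (volume.restrict (Ioi R))) :
    ∀ᶠ x in atTop, IntegrableOn f (Ioi x) := by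
  obtain ⟨a, ha, haκ⟩ := exists_between hκ
  filter_upwards [eventually_forall_ge_atTop.mpr (h.eventually_le_exp haκ),
    eventually_forall_ge_atTop.mpr h.eventually_pos, eventually_ge_atTop 1, eventually_ge_atTop R]
    with x hle hpos hx hRx
  refine ((exp_neg_integrableOn_Ioi x ha).const_mul (exp (a * x - a * x ^ n))).mono'
    (hf.mono_set (Ioi_subset_Ioi hRx)) (ae_restrict_of_forall_mem measurableSet_Ioi fun y hy ↦ ?_)
  have hxy : x ≤ y := le_of_lt hy
  rw [norm_of_nonneg (hpos y hxy).le]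
  exact (hle y hxy).trans (exp_neg_mul_pow_le hn ha.le hx hxy)

lemma eventually_exp_le_integral_Ioi (h : HasExpDecay f n κ) (hκ : 0 < κ)
    (hint : ∀ᶠ x in atTop, IntegrableOn f (Ioi x)) {b : ℝ} (hb : κ < b) :
    ∀ᶠ x in atTop, exp (-(b * x ^ n)) ≤ ∫ y in Ioi x, f y := by
  obtain ⟨c, hκc, hcb⟩ := exists_between hb
  have hc : 0 < c := hκ.trans hκc
  filter_upwards [eventually_forall_ge_atTop.mpr (h.eventually_exp_le hκc), hint,
    eventually_mul_add_one_pow_le n hc hcb, eventually_ge_atTop 0] with x hle hint hpow hx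
  have hsub : Ioc x (x + 1) ⊆ Ioi x := Ioc_subset_Ioi_self
  calc exp (-(b * x ^ n)) ≤ exp (-(c * (x + 1) ^ n)) := by gcongr
    _ ≤ ∫ y in Ioc x (x + 1), f y := by
      have hconst : ∀ y ∈ Ioc x (x + 1), exp (-(c * (x + 1) ^ n)) ≤ f y := fun y hy ↦ by
        have : 0 ≤ y := hx.trans hy.1.le
        exact le_trans (by gcongr; exact hy.2) (hle y hy.1.le)
      simpa using setIntegral_ge_of_const_le_real measurableSet_Ioc (by simp) hconst
        (hint.mono_set hsub)
    _ ≤ ∫ y in Ioi x, f y :=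
      setIntegral_mono_set hint
        (ae_restrict_of_forall_mem measurableSet_Ioi fun y hy ↦
          (exp_pos _).le.trans (hle y (le_of_lt hy)))
        (.of_forall hsub)

theorem integral_Ioi (h : HasExpDecay f n κ) (hn : n ≠ 0) (hκ : 0 < κ)
    (hf : AEStronglyMeasurable f (volume.restrict (Ioi R))) :
    HasExpDecay (fun x ↦ ∫ y in Ioi x, f y) n κ := by
  have hint := h.eventually_integrableOn_Ioi hn hκ hf
  refine of_bounds hn hκ (fun a ha haκ ↦ ⟨a⁻¹, ?_⟩) fun b hb ↦ ⟨1, one_pos, ?_⟩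
  · filter_upwards [eventually_forall_ge_atTop.mpr (h.eventually_le_exp haκ), hint,
      eventually_ge_atTop 1] with x hle hint hx
    exact integral_Ioi_exp_neg_mul_pow_le hn ha hx hint hle
  · simpa only [one_mul] using h.eventually_exp_le_integral_Ioi hκ hint hb

end HasExpDecay

end TailIntegral

/-! ### Mixtures of rescalings -/

lemma aestronglyMeasurable_tsum {α E ι : Type*} [MeasurableSpace α] {μ : Measure α}
    [NormedAddCommGroup E] [Countable ι] {f : ι → α → E}
    (hf : ∀ i, AEStronglyMeasurable (f i) μ) (hsum : ∀ᵐ x ∂μ, Summable fun i ↦ f i x) :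
    AEStronglyMeasurable (fun x ↦ ∑' i, f i x) μ :=
  aestronglyMeasurable_of_tendsto_ae atTop
    (fun s ↦ s.aestronglyMeasurable_fun_sum fun i _ ↦ hf i)
    (hsum.mono fun _ hx ↦ hx.hasSum)

section Mixture

variable {ι : Type*} {f : ℝ → ℝ} {n : ℕ} {κ d : ℝ} {w δ : ι → ℝ}

lemma eventually_forall_mul {p : ℝ → Prop} (hp : ∀ᶠ x in atTop, p x) (hd : 0 < d)
    (hδ : ∀ i, d ≤ δ i) : ∀ᶠ x in atTop, ∀ i, p (δ i * x) := by
  filter_upwards [(tendsto_id.const_mul_atTop hd).eventually (eventually_forall_ge_atTop.mpr hp),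
    eventually_ge_atTop 0] with x hx hx0 i
  exact hx _ (mul_le_mul_of_nonneg_right (hδ i) hx0)

lemma exp_neg_mul_mul_pow_le {a D x : ℝ} (ha : 0 ≤ a) (hd : 0 ≤ d) (hdD : d ≤ D) (hx : 1 ≤ x) :
    exp (-(a * (D * x) ^ n)) ≤
      exp (a * d ^ n) * exp (-(a * D ^ n)) * exp (-(a * d ^ n * x ^ n)) := by
  have hpow : d ^ n ≤ D ^ n := by gcongr
  have hprod : 0 ≤ a * ((D ^ n - d ^ n) * (x ^ n - 1)) :=
    mul_nonneg ha (mul_nonneg (sub_nonneg.mpr hpow) (sub_nonneg.mpr (one_le_pow₀ hx)))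
  rw [← exp_add, ← exp_add, exp_le_exp, mul_pow]
  linarith

namespace HasExpDecay

lemma eventually_forall_mixture_le (h : HasExpDecay f n κ) (hw : ∀ i, 0 ≤ w i) (hd : 0 < d)
    (hδ : ∀ i, d ≤ δ i) {a : ℝ} (ha : 0 ≤ a) (haκ : a < κ) :
    ∀ᶠ x in atTop, ∀ i, w i * f (δ i * x) ≤
      w i * exp (-(a * δ i ^ n)) * (exp (a * d ^ n) * exp (-(a * d ^ n * x ^ n))) := by
  filter_upwards [eventually_forall_mul (h.eventually_le_exp haκ) hd hδ, eventually_ge_atTop 1]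
    with x hx hx1 i
  calc w i * f (δ i * x)
    _ ≤ w i * (exp (a * d ^ n) * exp (-(a * δ i ^ n)) * exp (-(a * d ^ n * x ^ n))) :=
        mul_le_mul_of_nonneg_left ((hx i).trans (exp_neg_mul_mul_pow_le ha hd.le (hδ i) hx1)) (hw i)
    _ = _ := by ring

lemma eventually_forall_mixture_nonneg (h : HasExpDecay f n κ) (hw : ∀ i, 0 ≤ w i) (hd : 0 < d)
    (hδ : ∀ i, d ≤ δ i) : ∀ᶠ x in atTop, ∀ i, 0 ≤ w i * f (δ i * x) :=
  (eventually_forall_mul h.eventually_pos hd hδ).mono fun _ hx i ↦ mul_nonneg (hw i) (hx i).le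

lemma eventually_summable_mixture (h : HasExpDecay f n κ) (hκ : 0 < κ) (hw : ∀ i, 0 ≤ w i)
    (hd : 0 < d) (hδ : ∀ i, d ≤ δ i)
    (hsum : ∀ t > 0, Summable fun i ↦ w i * exp (-(t * δ i ^ n))) :
    ∀ᶠ x in atTop, Summable fun i ↦ w i * f (δ i * x) := by
  obtain ⟨a, ha, haκ⟩ := exists_between hκ
  filter_upwards [h.eventually_forall_mixture_le hw hd hδ ha.le haκ,
    h.eventually_forall_mixture_nonneg hw hd hδ] with x hle hpos
  exact .of_nonneg_of_le hpos hle ((hsum a ha).mul_right _)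

theorem mixture (h : HasExpDecay f n κ) (hn : n ≠ 0) (hκ : 0 < κ) (hw : ∀ i, 0 ≤ w i) {i₀ : ι}
    (hw₀ : 0 < w i₀) (hδ₀ : 0 < δ i₀) (hδ : ∀ i, δ i₀ ≤ δ i)
    (hsum : ∀ t > 0, Summable fun i ↦ w i * exp (-(t * δ i ^ n))) :
    HasExpDecay (fun x ↦ ∑' i, w i * f (δ i * x)) n (κ * δ i₀ ^ n) := by
  have hsummable := h.eventually_summable_mixture hκ hw hδ₀ hδ hsum
  refine of_bounds hn (by positivity) (fun b hb hbκ ↦ ?_) fun b hb ↦ ⟨w i₀, hw₀, ?_⟩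
  · obtain ⟨a, ha, rfl⟩ : ∃ a > 0, a * δ i₀ ^ n = b :=
      ⟨b / δ i₀ ^ n, by positivity, div_mul_cancel₀ b (by positivity)⟩
    have haκ : a < κ := lt_of_mul_lt_mul_right hbκ (by positivity)
    refine ⟨(∑' i, w i * exp (-(a * δ i ^ n))) * exp (a * δ i₀ ^ n), ?_⟩
    filter_upwards [h.eventually_forall_mixture_le hw hδ₀ hδ ha.le haκ, hsummable] with x hle hx
    rw [mul_assoc, ← tsum_mul_right]
    exact hx.tsum_le_tsum hle ((hsum a ha).mul_right _)
  · filter_upwards [(h.comp_const_mul hδ₀).eventually_exp_le hb, hsummable,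
      h.eventually_forall_mixture_nonneg hw hδ₀ hδ] with x hle hx hpos
    exact (mul_le_mul_of_nonneg_left hle hw₀.le).trans (hx.le_tsum i₀ fun i _ ↦ hpos i)

theorem integral_Ioi_mixture [Countable ι] (h : HasExpDecay f n κ) (hn : n ≠ 0) (hκ : 0 < κ)
    (hf : Measurable f) (hw : ∀ i, 0 ≤ w i) {i₀ : ι} (hw₀ : 0 < w i₀) (hδ₀ : 0 < δ i₀)
    (hδ : ∀ i, δ i₀ ≤ δ i) (hsum : ∀ t > 0, Summable fun i ↦ w i * exp (-(t * δ i ^ n))) :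
    HasExpDecay (fun x ↦ ∫ y in Ioi x, ∑' i, w i * f (δ i * y)) n (κ * δ i₀ ^ n) := by
  obtain ⟨R, hR⟩ := eventually_atTop.mp (h.eventually_summable_mixture hκ hw hδ₀ hδ hsum)
  refine (h.mixture hn hκ hw hw₀ hδ₀ hδ hsum).integral_Ioi hn (by positivity) (R := R) ?_
  refine aestronglyMeasurable_tsum (fun i ↦ ?_)
    (ae_restrict_of_forall_mem measurableSet_Ioi fun y hy ↦ hR y (le_of_lt hy))
  exact ((hf.comp (measurable_const_mul _)).const_mul _).aestronglyMeasurable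

end HasExpDecay

end Mixture

/-! ### Macdonald integrals -/

/-- The integral `∫₀^∞ v ^ (s - 1) * exp (-v - a / v) dv`, which for `0 < a` is
`2 * a ^ (s / 2) * K_s (2 * √a)` with `K_s` the Macdonald (modified Bessel) function. It deforms
the Gamma integral, to which it reduces at `a = 0`. -/
def macdonaldIntegral (s a : ℝ) : ℝ :=
  ∫ v in Ioi 0, v ^ (s - 1) * exp (-v - a / v)

lemma integral_Ioi_eq_integral_comp_div (f : ℝ → ℝ) {a : ℝ} (ha : 0 < a) :
    ∫ v in Ioi 0, f v = ∫ w in Ioi 0, a / w ^ 2 * f (a / w) := by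
  have hscale := integral_comp_mul_left_Ioi f 0 ha
  have hinv := integral_comp_rpow_Ioi (fun w ↦ f (a * w)) (p := -1) (by norm_num)
  rw [mul_zero] at hscale
  rw [hscale, smul_eq_mul, eq_inv_mul_iff_mul_eq₀ ha.ne', ← integral_const_mul] at hinv
  rw [← hinv]
  refine setIntegral_congr_fun measurableSet_Ioi fun w (hw : 0 < w) ↦ ?_
  have hpow : w ^ (-1 - 1 : ℝ) = (w ^ 2)⁻¹ := by
    rw [← rpow_natCast, ← rpow_neg hw.le]
    norm_num
  simp only [smul_eq_mul, abs_neg, abs_one, one_mul, hpow, rpow_neg_one, div_eq_mul_inv]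
  ring

lemma eventually_exp_neg_mul_le_rpow (r : ℝ) {η : ℝ} (hη : 0 < η) :
    ∀ᶠ v : ℝ in atTop, exp (-(η * v)) ≤ v ^ r := by
  filter_upwards [(isLittleO_rpow_exp_pos_mul_atTop (-r) hη).bound one_pos, eventually_gt_atTop 0]
    with v hle hv
  rw [one_mul, norm_of_nonneg (by positivity), norm_of_nonneg (by positivity), rpow_neg hv.le]
    at hle
  rw [exp_neg]
  exact inv_le_of_inv_le₀ (by positivity) hle

namespace macdonaldIntegral

variable {s a t : ℝ}

lemma aestronglyMeasurable_integrand (s a : ℝ) (μ : Measure ℝ) :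
    AEStronglyMeasurable (fun v ↦ v ^ (s - 1) * exp (-v - a / v)) μ :=
  Measurable.aestronglyMeasurable (by fun_prop)

lemma integrand_nonneg {v : ℝ} (hv : 0 < v) : 0 ≤ v ^ (s - 1) * exp (-v - a / v) := by
  positivity

lemma norm_integrand_le {v : ℝ} (ha : 0 ≤ a) (hv : 0 < v) :
    ‖v ^ (s - 1) * exp (-v - a / v)‖ ≤ exp (-v) * v ^ (s - 1) := by
  have hdiv : 0 ≤ a / v := by positivity
  rw [norm_of_nonneg (integrand_nonneg hv), mul_comm]
  gcongr
  linarith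

lemma integrableOn_integrand (hs : 0 < s) (ha : 0 ≤ a) :
    IntegrableOn (fun v ↦ v ^ (s - 1) * exp (-v - a / v)) (Ioi 0) :=
  (GammaIntegral_convergent hs).mono' (aestronglyMeasurable_integrand s a _)
    (ae_restrict_of_forall_mem measurableSet_Ioi fun _ hv ↦ norm_integrand_le ha hv)

lemma tendsto_nhdsGT_zero (hs : 0 < s) :
    Tendsto (macdonaldIntegral s) (𝓝[>] 0) (𝓝 (Gamma s)) := by
  rw [Gamma_eq_integral hs]
  refine tendsto_integral_filter_of_dominated_convergence (fun v ↦ exp (-v) * v ^ (s - 1))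
    (.of_forall fun a ↦ aestronglyMeasurable_integrand s a _) ?_ (GammaIntegral_convergent hs)
    (.of_forall fun v ↦ ?_)
  · filter_upwards [self_mem_nhdsWithin] with a (ha : 0 < a)
    exact ae_restrict_of_forall_mem measurableSet_Ioi fun v hv ↦ norm_integrand_le ha.le hv
  · have hcont : Continuous fun a : ℝ ↦ v ^ (s - 1) * exp (-v - a / v) := by fun_prop
    simpa [mul_comm] using (hcont.tendsto 0).mono_left nhdsWithin_le_nhds

lemma norm_deriv_integrand_le {v x : ℝ} (ha : 0 < a) (hx : a < x) (hv : 0 < v) :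
    ‖-(v ^ (s - 1 - 1) * exp (-v - x / v))‖ ≤ a⁻¹ * (exp (-v) * v ^ (s - 1)) := by
  have hx0 : 0 < x := ha.trans hx
  have hexp : exp (-(x / v)) ≤ v / a :=
    calc exp (-(x / v)) ≤ (x / v)⁻¹ := by
          rw [exp_neg]
          gcongr
          linarith [add_one_le_exp (x / v)]
      _ = v / x := inv_div x v
      _ ≤ v / a := by gcongr
  rw [norm_neg, norm_of_nonneg (integrand_nonneg hv), sub_eq_add_neg (-v), exp_add]
  calc v ^ (s - 1 - 1) * (exp (-v) * exp (-(x / v)))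
    _ ≤ v ^ (s - 1 - 1) * (exp (-v) * (v / a)) := by gcongr
    _ = a⁻¹ * (exp (-v) * v ^ (s - 1)) := by
        rw [rpow_sub_one hv.ne' (s - 1)]
        field_simp

lemma hasDerivAt_integrand {v : ℝ} (hv : 0 < v) :
    HasDerivAt (fun a ↦ v ^ (s - 1) * exp (-v - a / v))
      (-(v ^ (s - 1 - 1) * exp (-v - a / v))) a := by
  have hexponent : HasDerivAt (fun a ↦ -v - a / v) (-(1 / v)) a :=
    ((hasDerivAt_id a).div_const v).const_sub (-v)
  refine (hexponent.exp.const_mul (v ^ (s - 1))).congr_deriv ?_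
  rw [rpow_sub_one hv.ne' (s - 1)]
  ring

theorem hasDerivAt (hs : 0 < s) (ha : 0 < a) :
    HasDerivAt (macdonaldIntegral s) (-macdonaldIntegral (s - 1) a) a := by
  have hdiff := (hasDerivAt_integral_of_dominated_loc_of_deriv_le
    (μ := volume.restrict (Ioi 0)) (F := fun a v ↦ v ^ (s - 1) * exp (-v - a / v))
    (F' := fun a v ↦ -(v ^ (s - 1 - 1) * exp (-v - a / v)))
    (bound := fun v ↦ (a / 2)⁻¹ * (exp (-v) * v ^ (s - 1)))
    (Ioi_mem_nhds (half_lt_self ha))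
    (.of_forall fun a ↦ aestronglyMeasurable_integrand s a _)
    (integrableOn_integrand hs ha.le) (aestronglyMeasurable_integrand (s - 1) a _).neg
    (ae_restrict_of_forall_mem measurableSet_Ioi fun v hv x hx ↦
      norm_deriv_integrand_le (half_pos ha) hx hv)
    ((GammaIntegral_convergent hs).const_mul _)
    (ae_restrict_of_forall_mem measurableSet_Ioi fun v hv x _ ↦ hasDerivAt_integrand hv)).2
  rwa [integral_neg] at hdiff

theorem neg_left (s : ℝ) (ha : 0 < a) :
    macdonaldIntegral (-s) a = a ^ (-s) * macdonaldIntegral s a := by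
  rw [macdonaldIntegral, integral_Ioi_eq_integral_comp_div _ ha, macdonaldIntegral,
    ← integral_const_mul]
  refine setIntegral_congr_fun measurableSet_Ioi fun w (hw : 0 < w) ↦ ?_
  have hpow : a / w ^ 2 * (a / w) ^ (-s - 1) = a ^ (-s) * w ^ (s - 1) := by
    rw [rpow_sub_one (by positivity), div_rpow ha.le hw.le, rpow_sub_one hw.ne', rpow_neg hw.le]
    field_simp
  rw [← mul_assoc, hpow, mul_assoc, div_div_cancel₀ ha.ne', neg_sub_comm]

lemma sq_le {ε : ℝ} (hs : 0 < s) (hε : 0 < ε) (hε1 : ε ≤ 1) :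
    macdonaldIntegral s (t ^ 2) ≤ (1 / ε) ^ s * Gamma s * exp (-(2 * (1 - ε) * t)) := by
  have hint : IntegrableOn (fun v : ℝ ↦ v ^ (s - 1) * exp (-(ε * v))) (Ioi 0) := by
    simpa using integrableOn_rpow_mul_exp_neg_mul_rpow (s := s - 1) (p := 1) (by linarith)
      one_pos hε
  rw [← integral_rpow_mul_exp_neg_mul_Ioi hs hε, ← integral_mul_const]
  refine setIntegral_mono_on (integrableOn_integrand hs (sq_nonneg t)) (hint.mul_const _)
    measurableSet_Ioi fun v (hv : 0 < v) ↦ ?_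
  have hamgm : 0 ≤ v + t ^ 2 / v - 2 * t := by
    rw [show v + t ^ 2 / v - 2 * t = (v - t) ^ 2 / v by field_simp; ring]
    positivity
  have hdiv : 0 ≤ t ^ 2 / v := by positivity
  rw [mul_assoc, ← exp_add]
  gcongr
  nlinarith [mul_nonneg (sub_nonneg.mpr hε1) hamgm]

lemma eventually_le_sq {η : ℝ} (hs : 0 < s) (hη : 0 < η) :
    ∀ᶠ t in atTop,
      exp (-(1 + η)) * exp (-((2 + η) * t)) ≤ macdonaldIntegral s (t ^ 2) := by
  filter_upwards [eventually_forall_ge_atTop.mpr (eventually_exp_neg_mul_le_rpow (s - 1) hη),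
    eventually_gt_atTop 0] with t hpow ht
  have hint := integrableOn_integrand hs (sq_nonneg t)
  have hsub : Ioc t (t + 1) ⊆ Ioi 0 := fun v hv ↦ ht.trans hv.1
  have hle : ∀ v ∈ Ioc t (t + 1),
      exp (-(1 + η)) * exp (-((2 + η) * t)) ≤ v ^ (s - 1) * exp (-v - t ^ 2 / v) := by
    intro v ⟨htv, hvt⟩
    have hdiv : t ^ 2 / v ≤ t := by
      rw [div_le_iff₀ (ht.trans htv)]
      nlinarith
    calc exp (-(1 + η)) * exp (-((2 + η) * t)) = exp (-(η * (t + 1))) * exp (-(t + 1) - t) := by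
          rw [← exp_add, ← exp_add]
          ring_nf
      _ ≤ exp (-(η * v)) * exp (-v - t ^ 2 / v) := by gcongr
      _ ≤ v ^ (s - 1) * exp (-v - t ^ 2 / v) := by gcongr; exact hpow v htv.le
  calc exp (-(1 + η)) * exp (-((2 + η) * t))
    _ ≤ ∫ v in Ioc t (t + 1), v ^ (s - 1) * exp (-v - t ^ 2 / v) := by
        simpa using setIntegral_ge_of_const_le_real measurableSet_Ioc (by simp) hle
          (hint.mono_set hsub)
    _ ≤ macdonaldIntegral s (t ^ 2) :=
        setIntegral_mono_set hint
          (ae_restrict_of_forall_mem measurableSet_Ioi fun v hv ↦ integrand_nonneg hv)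
          (.of_forall hsub)

theorem hasExpDecay_sq (hs : 0 < s) :
    HasExpDecay (fun t ↦ macdonaldIntegral s (t ^ 2)) 1 2 := by
  refine .of_bounds one_ne_zero two_pos (fun a _ ha2 ↦ ?_) fun b hb ↦ ?_
  · refine ⟨(1 / (1 - a / 2)) ^ s * Gamma s, .of_forall fun t ↦ ?_⟩
    have hle := sq_le (t := t) (ε := 1 - a / 2) hs (by linarith) (by linarith)
    rwa [show 2 * (1 - (1 - a / 2)) * t = a * t ^ 1 by ring] at hle
  · refine ⟨exp (-(1 + (b - 2))), exp_pos _, ?_⟩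
    simpa only [add_sub_cancel, pow_one] using eventually_le_sq hs (sub_pos.mpr hb)

lemma hasExpDecay_pow_six (hs : 0 < s) :
    HasExpDecay (fun y ↦ macdonaldIntegral s (y ^ 6)) 3 2 := by
  simpa only [← pow_mul, Nat.reduceMul, mul_one]
    using (hasExpDecay_sq hs).comp_pow three_ne_zero

lemma tendsto_pow_six (hs : 0 < s) :
    Tendsto (fun y : ℝ ↦ macdonaldIntegral s (y ^ 6)) (𝓝[>] 0) (𝓝 (Gamma s)) := by
  refine (tendsto_nhdsGT_zero hs).comp (tendsto_nhdsWithin_iff.mpr ⟨?_, ?_⟩)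
  · simpa using ((continuous_pow 6).tendsto (0 : ℝ)).mono_left nhdsWithin_le_nhds
  · filter_upwards [self_mem_nhdsWithin] with y (hy : 0 < y) using pow_pos hy 6

lemma hasDerivAt_two_thirds_pow_six {y : ℝ} (hy : 0 < y) :
    HasDerivAt (fun y ↦ macdonaldIntegral (2 / 3) (y ^ 6))
      (-6 * y ^ 3 * macdonaldIntegral (1 / 3) (y ^ 6)) y := by
  have hrpow : (y ^ 6) ^ (-(1 / 3) : ℝ) = (y ^ 2)⁻¹ := by
    rw [rpow_neg (by positivity), ← rpow_natCast, ← rpow_mul hy.le, ← rpow_natCast]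
    norm_num
  refine ((hasDerivAt (by norm_num) (by positivity)).comp y (hasDerivAt_pow 6 y)).congr_deriv ?_
  rw [show (2 / 3 - 1 : ℝ) = -(1 / 3) by norm_num, neg_left _ (by positivity), hrpow]
  field

lemma hasDerivAt_one_third_pow_six {y : ℝ} (hy : 0 < y) :
    HasDerivAt (fun y ↦ macdonaldIntegral (1 / 3) (y ^ 6))
      (-6 * y * macdonaldIntegral (2 / 3) (y ^ 6)) y := by
  have hrpow : (y ^ 6) ^ (-(2 / 3) : ℝ) = (y ^ 4)⁻¹ := by
    rw [rpow_neg (by positivity), ← rpow_natCast, ← rpow_mul hy.le, ← rpow_natCast]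
    norm_num
  refine ((hasDerivAt (by norm_num) (by positivity)).comp y (hasDerivAt_pow 6 y)).congr_deriv ?_
  rw [show (1 / 3 - 1 : ℝ) = -(2 / 3) by norm_num, neg_left _ (by positivity), hrpow]
  field

end macdonaldIntegral

/-! ### The differential equation of the Mittag-Leffler density -/

lemma summable_of_norm_add_le {E : Type*} [NormedAddCommGroup E] [CompleteSpace E] {f : ℕ → E}
    {m : ℕ} {r : ℝ} (hr₀ : 0 ≤ r) (hr₁ : r < 1) (hf : ∀ᶠ n in atTop, ‖f (n + m)‖ ≤ r * ‖f n‖) :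
    Summable f := by
  obtain ⟨N, hN⟩ := eventually_atTop.mp hf
  refine (summable_nat_add_iff (N + m)).mp (Summable.of_norm (summable_of_sum_range_le
    (c := r * (∑ i ∈ Finset.range m, ‖f (N + i)‖) / (1 - r)) (fun _ ↦ norm_nonneg _) fun n ↦ ?_))
  have hsum : ∑ i ∈ Finset.range n, ‖f (i + (N + m))‖ ≤
      r * (∑ i ∈ Finset.range m, ‖f (N + i)‖ + ∑ i ∈ Finset.range n, ‖f (i + (N + m))‖) :=
    calc ∑ i ∈ Finset.range n, ‖f (i + (N + m))‖
      _ ≤ ∑ i ∈ Finset.range n, r * ‖f (N + i)‖ := Finset.sum_le_sum fun i _ ↦ by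
          rw [show i + (N + m) = N + i + m by ring]
          exact hN _ (Nat.le_add_right N i)
      _ = r * ∑ i ∈ Finset.range n, ‖f (N + i)‖ := (Finset.mul_sum ..).symm
      _ ≤ r * ∑ i ∈ Finset.range (m + n), ‖f (N + i)‖ := by
          gcongr
          exact Nat.le_add_left n m
      _ = _ := by
          rw [Finset.sum_range_add]
          simp only [add_comm, add_left_comm]
  rw [le_div_iff₀ (sub_pos.mpr hr₁)]
  linarith

section PowerSeries

variable {𝕜 : Type*} [RCLike 𝕜] {c : ℕ → 𝕜} {f : 𝕜 → 𝕜}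

lemma hasFPowerSeriesOnBall_of_hasSum_pow (h : ∀ x, HasSum (fun n ↦ c n * x ^ n) (f x)) :
    HasFPowerSeriesOnBall f (FormalMultilinearSeries.ofScalars 𝕜 c) 0 ⊤ where
  r_le := by
    refine (FormalMultilinearSeries.radius_eq_top_of_summable_norm _ fun r ↦ ?_).ge
    simpa [FormalMultilinearSeries.ofScalars_norm] using (h (r : ℝ)).summable.norm
  r_pos := ENNReal.coe_lt_top
  hasSum := fun {y} _ ↦ by
    simpa [FormalMultilinearSeries.ofScalars_apply_eq, mul_comm] using h y

lemma differentiable_of_hasSum_pow (h : ∀ x, HasSum (fun n ↦ c n * x ^ n) (f x)) :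
    Differentiable 𝕜 f :=
  differentiableOn_univ.mp (by
    simpa using (hasFPowerSeriesOnBall_of_hasSum_pow h).differentiableOn)

lemma hasSum_deriv_of_hasSum_pow (h : ∀ x, HasSum (fun n ↦ c n * x ^ n) (f x)) (x : 𝕜) :
    HasSum (fun n : ℕ ↦ (n + 1) * c (n + 1) * x ^ n) (deriv f x) := by
  have hfderiv := ((hasFPowerSeriesOnBall_of_hasSum_pow h).fderiv.hasSum (y := x) (by simp)).mapL
    (ContinuousLinearMap.apply 𝕜 𝕜 1)
  simpa [FormalMultilinearSeries.apply_eq_pow_smul_coeff, mul_comm] using hfderiv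

end PowerSeries

/-- The Taylor coefficients at `0` of the Mittag-Leffler density `mittagLeffler23`. -/
def mittagLeffler23Coeff (k : ℕ) : ℝ :=
  1 / π * (sin (2 * π * (k + 1) / 3) * Gamma (2 * (k + 1) / 3) / k.factorial * (-1) ^ k)

namespace mittagLeffler23Coeff

lemma zero_eq : mittagLeffler23Coeff 0 = √3 / (2 * π) * Gamma (2 / 3) := by
  have hsin : sin (2 * π / 3) = √3 / 2 := by
    rw [show 2 * π / 3 = π - π / 3 by ring, sin_pi_sub, sin_pi_div_three]
  norm_num [mittagLeffler23Coeff, hsin]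
  ring

lemma one_eq : mittagLeffler23Coeff 1 = √3 / (6 * π) * Gamma (1 / 3) := by
  have hsin : sin (2 * π * (1 + 1) / 3) = -(√3 / 2) := by
    rw [show 2 * π * (1 + 1) / 3 = π / 3 + π by ring, sin_add_pi, sin_pi_div_three]
  have hGamma : Gamma (2 * (1 + 1) / 3) = 1 / 3 * Gamma (1 / 3) := by
    rw [← Gamma_add_one (by norm_num)]
    norm_num
  simp only [mittagLeffler23Coeff, Nat.cast_one, hsin, hGamma, Nat.factorial_one]
  ring

lemma two_eq : mittagLeffler23Coeff 2 = 0 := by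
  have hsin : sin (2 * π * (2 + 1) / 3) = 0 := by
    rw [show 2 * π * (2 + 1) / 3 = 2 * π by ring, sin_two_pi]
  simp only [mittagLeffler23Coeff, Nat.cast_ofNat, hsin, zero_mul, zero_div, mul_zero]

lemma add_three (k : ℕ) :
    (k + 3) * (k + 2) * mittagLeffler23Coeff (k + 3) =
      -(2 / 9) * (2 * k + 5) * mittagLeffler23Coeff k := by
  have hsin : sin (2 * π * ((k + 3 : ℕ) + 1) / 3) = sin (2 * π * (k + 1) / 3) := by
    rw [← sin_add_two_pi (2 * π * (k + 1) / 3)]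
    push_cast
    ring_nf
  have hGamma : Gamma (2 * ((k + 3 : ℕ) + 1) / 3) =
      (2 * (k + 1) / 3 + 1) * (2 * (k + 1) / 3 * Gamma (2 * (k + 1) / 3)) := by
    rw [← Gamma_add_one (by positivity), ← Gamma_add_one (by positivity)]
    push_cast
    ring_nf
  simp only [mittagLeffler23Coeff, hsin, hGamma, Nat.factorial_succ]
  push_cast
  field

lemma abs_add_three_le (k : ℕ) :
    |mittagLeffler23Coeff (k + 3)| ≤ (k + 2 : ℝ)⁻¹ * |mittagLeffler23Coeff k| := by
  have habs : (k + 3) * (k + 2) * |mittagLeffler23Coeff (k + 3)| =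
      2 / 9 * (2 * k + 5) * |mittagLeffler23Coeff k| := by
    have h := congrArg abs (add_three k)
    rwa [neg_mul, neg_mul, abs_neg, abs_mul, abs_mul (2 / 9 * _),
      abs_of_pos (show (0 : ℝ) < (k + 3) * (k + 2) by positivity),
      abs_of_pos (show (0 : ℝ) < 2 / 9 * (2 * k + 5) by positivity)] at h
  rw [le_inv_mul_iff₀ (by positivity)]
  refine le_of_mul_le_mul_left ?_ (show (0 : ℝ) < k + 3 by positivity)
  rw [← mul_assoc, habs]
  gcongr
  linarith [(k.cast_nonneg : (0 : ℝ) ≤ k)]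

lemma summable_mul_pow (x : ℝ) : Summable fun k ↦ mittagLeffler23Coeff k * x ^ k := by
  refine summable_of_norm_add_le (m := 3) (r := 1 / 2) (by norm_num) (by norm_num) ?_
  filter_upwards [tendsto_natCast_atTop_atTop.eventually_ge_atTop (2 * |x| ^ 3)] with k hk
  have hhalf : (k + 2 : ℝ)⁻¹ * |x| ^ 3 ≤ 1 / 2 := by
    rw [inv_mul_le_iff₀ (by positivity)]
    linarith
  rw [norm_mul, norm_mul, norm_pow, norm_pow]
  calc |mittagLeffler23Coeff (k + 3)| * |x| ^ (k + 3)
    _ ≤ (k + 2 : ℝ)⁻¹ * |mittagLeffler23Coeff k| * |x| ^ (k + 3) := by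
        gcongr
        exact abs_add_three_le k
    _ = (k + 2 : ℝ)⁻¹ * |x| ^ 3 * (|mittagLeffler23Coeff k| * |x| ^ k) := by ring
    _ ≤ 1 / 2 * (|mittagLeffler23Coeff k| * |x| ^ k) := by gcongr

end mittagLeffler23Coeff

namespace mittagLeffler23

lemma hasSum_coeff (x : ℝ) :
    HasSum (fun k ↦ mittagLeffler23Coeff k * x ^ k) (mittagLeffler23 x) := by
  convert (mittagLeffler23Coeff.summable_mul_pow x).hasSum using 1
  rw [mittagLeffler23, ← tsum_mul_left]
  refine tsum_congr fun k ↦ ?_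
  rw [mittagLeffler23Coeff, neg_pow]
  ring

lemma hasSum_deriv (x : ℝ) :
    HasSum (fun k : ℕ ↦ (k + 1) * mittagLeffler23Coeff (k + 1) * x ^ k)
      (deriv mittagLeffler23 x) :=
  hasSum_deriv_of_hasSum_pow hasSum_coeff x

lemma hasSum_deriv_deriv (x : ℝ) :
    HasSum (fun k : ℕ ↦ (k + 1) * ((k + 1 + 1) * mittagLeffler23Coeff (k + 2)) * x ^ k)
      (deriv (deriv mittagLeffler23) x) :=
  mod_cast hasSum_deriv_of_hasSum_pow (c := fun k ↦ (k + 1) * mittagLeffler23Coeff (k + 1))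
    hasSum_deriv x

lemma differentiable : Differentiable ℝ mittagLeffler23 :=
  differentiable_of_hasSum_pow hasSum_coeff

lemma differentiable_deriv : Differentiable ℝ (deriv mittagLeffler23) :=
  differentiable_of_hasSum_pow (c := fun k ↦ (k + 1) * mittagLeffler23Coeff (k + 1)) hasSum_deriv

lemma apply_zero : mittagLeffler23 0 = √3 / (2 * π) * Gamma (2 / 3) := by
  rw [← mittagLeffler23Coeff.zero_eq, ← (hasSum_coeff 0).tsum_eq,
    tsum_eq_single 0 fun k hk ↦ by simp [hk]]
  simp

lemma deriv_zero : deriv mittagLeffler23 0 = √3 / (6 * π) * Gamma (1 / 3) := by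
  rw [← mittagLeffler23Coeff.one_eq, ← (hasSum_deriv 0).tsum_eq,
    tsum_eq_single 0 fun k hk ↦ by simp [hk]]
  simp

lemma hasSum_mul_deriv (x : ℝ) :
    HasSum (fun k : ℕ ↦ k * mittagLeffler23Coeff k * x ^ k) (x * deriv mittagLeffler23 x) := by
  rw [← hasSum_nat_add_iff' 1]
  simpa [pow_succ', mul_left_comm] using (hasSum_deriv x).mul_left x

theorem deriv_deriv (x : ℝ) :
    deriv (deriv mittagLeffler23) x =
      -(4 / 9) * x ^ 2 * deriv mittagLeffler23 x - 10 / 9 * x * mittagLeffler23 x := by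
  have hshift := (hasSum_nat_add_iff' 1).mpr (hasSum_deriv_deriv x)
  have hrec := ((hasSum_mul_deriv x).mul_left (-(4 / 9) * x)).sub
    ((hasSum_coeff x).mul_left (10 / 9 * x))
  have hterm : ∀ k : ℕ,
      ((k + 1 : ℕ) + 1) * (((k + 1 : ℕ) + 1 + 1) * mittagLeffler23Coeff (k + 1 + 2)) * x ^ (k + 1) =
        -(4 / 9) * x * (k * mittagLeffler23Coeff k * x ^ k) -
          10 / 9 * x * (mittagLeffler23Coeff k * x ^ k) := fun k ↦ by
    push_cast
    linear_combination x ^ (k + 1) * mittagLeffler23Coeff.add_three k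
  rw [funext hterm] at hshift
  have huniq := hshift.unique hrec
  simp only [Finset.sum_range_one, Nat.cast_zero, zero_add, mittagLeffler23Coeff.two_eq, mul_zero,
    zero_mul, sub_zero] at huniq
  rw [huniq]
  ring

end mittagLeffler23

/-! ### Integral representation of the Mittag-Leffler density -/

-- Gronwall's inequality on `[s, t]` with `s → a`, so that no trajectory needs a derivative at `a`.
open scoped NNReal in
theorem eqOn_Ioo_of_hasDerivAt_of_tendsto_dist {E : Type*} [NormedAddCommGroup E] [NormedSpace ℝ E]
    {v : ℝ → E → E} {f g : ℝ → E} {a b : ℝ} {K : ℝ≥0} (hv : ∀ t ∈ Ioo a b, LipschitzWith K (v t))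
    (hf : ∀ t ∈ Ioo a b, HasDerivAt f (v t (f t)) t)
    (hg : ∀ t ∈ Ioo a b, HasDerivAt g (v t (g t)) t)
    (hfg : Tendsto (fun t ↦ dist (f t) (g t)) (𝓝[>] a) (𝓝 0)) : EqOn f g (Ioo a b) := by
  intro t ⟨hat, htb⟩
  have hbound : ∀ s ∈ Ioo a t, dist (f t) (g t) ≤ dist (f s) (g s) * exp (K * (t - a)) := by
    intro s ⟨has, hst⟩
    have hsub : Icc s t ⊆ Ioo a b := fun r hr ↦ ⟨has.trans_le hr.1, hr.2.trans_lt htb⟩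
    have hsub' : Ico s t ⊆ Ioo a b := Ico_subset_Icc_self.trans hsub
    have hgronwall := dist_le_of_trajectories_ODE_of_mem (s := fun _ ↦ univ)
      (fun r hr ↦ (hv r (hsub' hr)).lipschitzOnWith)
      (fun r hr ↦ (hf r (hsub hr)).continuousAt.continuousWithinAt)
      (fun r hr ↦ (hf r (hsub' hr)).hasDerivWithinAt) (fun _ _ ↦ mem_univ _)
      (fun r hr ↦ (hg r (hsub hr)).continuousAt.continuousWithinAt)
      (fun r hr ↦ (hg r (hsub' hr)).hasDerivWithinAt) (fun _ _ ↦ mem_univ _) le_rfl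
      t (right_mem_Icc.mpr hst.le)
    exact hgronwall.trans (by gcongr)
  have hlim := hfg.mul_const (exp (K * (t - a)))
  rw [zero_mul] at hlim
  exact dist_le_zero.mp (ge_of_tendsto hlim (eventually_of_mem (Ioo_mem_nhdsGT hat) hbound))

/-- The time-dependent linear vector field of the system `A' = -6 y³ C`, `C' = -6 y A`, of which
the pair of Macdonald integrals `macdonaldPair` is a solution. -/
def macdonaldField (y : ℝ) (p : ℝ × ℝ) : ℝ × ℝ := (-6 * y ^ 3 * p.2, -6 * y * p.1)

lemma lipschitzWith_macdonaldField {b y : ℝ} (hy : 0 ≤ y) (hyb : y ≤ b) :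
    LipschitzWith (6 * b ^ 3 + 6 * b).toNNReal (macdonaldField y) := by
  have hb : 0 ≤ b := hy.trans hyb
  refine .of_dist_le_mul fun p q ↦ ?_
  have hfst : dist p.1 q.1 ≤ dist p q := le_max_left _ _
  have hsnd : dist p.2 q.2 ≤ dist p q := le_max_right _ _
  rw [coe_toNNReal _ (by positivity), Prod.dist_eq, max_le_iff]
  simp only [macdonaldField, Real.dist_eq, ← mul_sub, abs_mul, abs_neg, abs_pow, abs_of_nonneg hy,
    Nat.abs_ofNat] at hfst hsnd ⊢
  constructor
  · calc 6 * y ^ 3 * |p.2 - q.2| ≤ (6 * b ^ 3 + 0) * dist p q := by rw [add_zero]; gcongr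
      _ ≤ _ := by gcongr; positivity
  · calc 6 * y * |p.1 - q.1| ≤ (0 + 6 * b) * dist p q := by rw [zero_add]; gcongr
      _ ≤ _ := by gcongr; positivity

lemma macdonaldField_smul (c y : ℝ) (p : ℝ × ℝ) :
    macdonaldField y (c • p) = c • macdonaldField y p := by
  ext <;> simp only [macdonaldField, Prod.smul_fst, Prod.smul_snd, smul_eq_mul] <;> ring

/-- The Macdonald integrals of index `2 / 3` and `1 / 3` at `y ^ 6`. -/
def macdonaldPair (y : ℝ) : ℝ × ℝ :=
  (macdonaldIntegral (2 / 3) (y ^ 6), macdonaldIntegral (1 / 3) (y ^ 6))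

lemma hasDerivAt_macdonaldPair {y : ℝ} (hy : 0 < y) :
    HasDerivAt macdonaldPair (macdonaldField y (macdonaldPair y)) y :=
  (macdonaldIntegral.hasDerivAt_two_thirds_pow_six hy).prodMk
    (macdonaldIntegral.hasDerivAt_one_third_pow_six hy)

lemma tendsto_macdonaldPair :
    Tendsto macdonaldPair (𝓝[>] 0) (𝓝 (Gamma (2 / 3), Gamma (1 / 3))) :=
  (macdonaldIntegral.tendsto_pow_six (by norm_num)).prodMk_nhds
    (macdonaldIntegral.tendsto_pow_six (by norm_num))

/-- The pair `(A, C)` for which `F y = mittagLeffler23 (3 * y)` and its derivative are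
`F = exp (-2y³) * (A + y * C)` and `F' = exp (-2y³) * (C - 12 * y² * (A + y * C))`. The second
equation is the derivative of the first one when `(A, C)` is a trajectory of `macdonaldField`. -/
def mittagLefflerPair (y : ℝ) : ℝ × ℝ :=
  let C := 3 * exp (2 * y ^ 3) *
    (deriv mittagLeffler23 (3 * y) + 4 * y ^ 2 * mittagLeffler23 (3 * y))
  (exp (2 * y ^ 3) * mittagLeffler23 (3 * y) - y * C, C)

lemma mittagLeffler23_three_mul (y : ℝ) :
    mittagLeffler23 (3 * y) =
      exp (-(2 * y ^ 3)) * ((mittagLefflerPair y).1 + y * (mittagLefflerPair y).2) := by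
  rw [mittagLefflerPair, sub_add_cancel, ← mul_assoc, ← exp_add, neg_add_cancel, exp_zero, one_mul]

lemma hasDerivAt_mittagLefflerPair (y : ℝ) :
    HasDerivAt mittagLefflerPair (macdonaldField y (mittagLefflerPair y)) y := by
  have hscale : HasDerivAt (fun y : ℝ ↦ 3 * y) 3 y := by
    simpa using (hasDerivAt_id y).const_mul 3
  have hF : HasDerivAt (fun y ↦ mittagLeffler23 (3 * y)) (deriv mittagLeffler23 (3 * y) * 3) y :=
    (mittagLeffler23.differentiable _).hasDerivAt.comp y hscale
  have hF' : HasDerivAt (fun y ↦ deriv mittagLeffler23 (3 * y))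
      (deriv (deriv mittagLeffler23) (3 * y) * 3) y :=
    (mittagLeffler23.differentiable_deriv _).hasDerivAt.comp y hscale
  have hexp : HasDerivAt (fun y : ℝ ↦ exp (2 * y ^ 3)) (exp (2 * y ^ 3) * (6 * y ^ 2)) y :=
    ((hasDerivAt_pow 3 y).const_mul 2).exp.congr_deriv (by push_cast; ring)
  have hsnd : HasDerivAt (fun y ↦ (mittagLefflerPair y).2)
      (-6 * y * (mittagLefflerPair y).1) y := by
    refine ((hexp.const_mul 3).mul
      (hF'.add (((hasDerivAt_pow 2 y).const_mul 4).mul hF))).congr_deriv ?_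
    simp only [mittagLefflerPair, mittagLeffler23.deriv_deriv, Pi.add_apply, Pi.mul_apply]
    push_cast
    ring
  refine HasDerivAt.prodMk (((hexp.mul hF).sub ((hasDerivAt_id y).mul hsnd)).congr_deriv ?_) hsnd
  simp only [mittagLefflerPair, id_eq]
  ring

lemma mittagLefflerPair_zero :
    mittagLefflerPair 0 = (√3 / (2 * π)) • (Gamma (2 / 3), Gamma (1 / 3)) := by
  ext <;> norm_num [mittagLefflerPair, mittagLeffler23.apply_zero, mittagLeffler23.deriv_zero]
  ring

lemma mittagLefflerPair_eq_smul_macdonaldPair {y : ℝ} (hy : 0 < y) :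
    mittagLefflerPair y = (√3 / (2 * π)) • macdonaldPair y := by
  have hlim : Tendsto (fun t ↦ dist (mittagLefflerPair t) ((√3 / (2 * π)) • macdonaldPair t))
      (𝓝[>] 0) (𝓝 (dist (mittagLefflerPair 0) (mittagLefflerPair 0))) := by
    refine .dist ((hasDerivAt_mittagLefflerPair 0).continuousAt.mono_left nhdsWithin_le_nhds) ?_
    rw [mittagLefflerPair_zero]
    exact tendsto_macdonaldPair.const_smul (√3 / (2 * π))
  rw [dist_self] at hlim
  refine eqOn_Ioo_of_hasDerivAt_of_tendsto_dist (b := y + 1)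
    (fun t ht ↦ lipschitzWith_macdonaldField ht.1.le ht.2.le)
    (fun t _ ↦ hasDerivAt_mittagLefflerPair t) (fun t ht ↦ ?_) hlim ⟨hy, lt_add_one y⟩
  rw [macdonaldField_smul]
  exact (hasDerivAt_macdonaldPair ht.1).const_smul (√3 / (2 * π))

theorem mittagLeffler23_three_mul_eq_macdonaldIntegral {y : ℝ} (hy : 0 < y) :
    mittagLeffler23 (3 * y) = √3 / (2 * π) * exp (-(2 * y ^ 3)) *
      (macdonaldIntegral (2 / 3) (y ^ 6) + y * macdonaldIntegral (1 / 3) (y ^ 6)) := by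
  rw [mittagLeffler23_three_mul, mittagLefflerPair_eq_smul_macdonaldPair hy]
  simp only [macdonaldPair, Prod.smul_fst, Prod.smul_snd, smul_eq_mul]
  ring

theorem hasExpDecay_mittagLeffler23 : HasExpDecay mittagLeffler23 3 (4 / 27) := by
  have h3 : (3 : ℕ) ≠ 0 := three_ne_zero
  have hG₁ : HasExpDecay (fun y ↦ macdonaldIntegral (2 / 3) (y ^ 6)) 3 2 :=
    macdonaldIntegral.hasExpDecay_pow_six (by norm_num)
  have hG₂ : HasExpDecay (fun y ↦ y * macdonaldIntegral (1 / 3) (y ^ 6)) 3 2 := by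
    simpa only [zero_add] using
      (hasExpDecay_id h3).mul (macdonaldIntegral.hasExpDecay_pow_six (by norm_num))
  have hscaled : HasExpDecay (fun y ↦ mittagLeffler23 (3 * y)) 3 (0 + 2 + 2) :=
    (((hasExpDecay_const h3 (c := √3 / (2 * π)) (by positivity)).mul (hasExpDecay_exp h3 2)).mul
      (HasExpDecay.add h3 two_pos hG₁ hG₂)).congr' (by
        filter_upwards [eventually_gt_atTop 0] with y hy
        exact (mittagLeffler23_three_mul_eq_macdonaldIntegral hy).symm)
  convert hscaled.comp_const_mul (c := 1 / 3) (by norm_num) using 1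
  · ext x
    ring_nf
  · norm_num

/-! ### Zeros of the derivative of an Airy function -/

theorem one_le_mul_sub_sq_of_hasDerivAt {u v q : ℝ → ℝ} {a b Q : ℝ}
    (hu : ∀ x ∈ Icc a b, HasDerivAt u (v x) x) (hv : ∀ x ∈ Icc a b, HasDerivAt v (q x * u x) x)
    (hq : ∀ x ∈ Icc a b, |q x| ≤ Q) {r s : ℝ} (hr : r ∈ Icc a b) (hs : s ∈ Icc a b)
    (hur : u r = 0) (hvr : v r ≠ 0) (hvs : v s = 0) : 1 ≤ Q * (b - a) ^ 2 := by
  obtain ⟨m, hm, hmax⟩ := isCompact_Icc.exists_isMaxOn ⟨r, hr⟩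
    (HasDerivAt.continuousOn hv).abs
  have hM : 0 < |v m| := (abs_pos.mpr hvr).trans_le (hmax hr)
  have hQ : 0 ≤ Q := (abs_nonneg _).trans (hq r hr)
  have hdist : ∀ x ∈ Icc a b, ∀ y ∈ Icc a b, |x - y| ≤ b - a := fun x hx y hy ↦
    abs_sub_le_iff.mpr ⟨by linarith [hx.2, hy.1], by linarith [hx.1, hy.2]⟩
  have hu_le : ∀ x ∈ Icc a b, |u x| ≤ |v m| * (b - a) := by
    intro x hx
    have hmvt : |u x - u r| ≤ |v m| * |x - r| :=
      (convex_Icc a b).norm_image_sub_le_of_norm_hasDerivWithin_le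
        (fun y hy ↦ (hu y hy).hasDerivWithinAt) (fun y hy ↦ hmax hy) hr hx
    rw [hur, sub_zero] at hmvt
    exact hmvt.trans (by gcongr; exact hdist x hx r hr)
  have hv_le : |v m| ≤ |v m| * (Q * (b - a) ^ 2) := by
    have hmvt : |v m - v s| ≤ Q * (|v m| * (b - a)) * |m - s| :=
      (convex_Icc a b).norm_image_sub_le_of_norm_hasDerivWithin_le
        (fun y hy ↦ (hv y hy).hasDerivWithinAt)
        (fun y hy ↦ (norm_mul_le _ _).trans
          (mul_le_mul (hq y hy) (hu_le y hy) (norm_nonneg _) hQ)) hs hm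
    have hab : 0 ≤ b - a := (abs_nonneg _).trans (hdist m hm s hs)
    rw [hvs, sub_zero] at hmvt
    calc |v m| ≤ Q * (|v m| * (b - a)) * (b - a) :=
          hmvt.trans (by gcongr; exact hdist m hm s hs)
      _ = |v m| * (Q * (b - a) ^ 2) := by ring
  exact le_of_mul_le_mul_left (by rwa [mul_one]) hM

namespace Airy

variable {u v : ℝ → ℝ}

-- The energy `v² - 2xu²` is nonincreasing, so to the left of `0` it is at least `v(0)²`.
lemma deriv_ne_zero_of_eq_zero (hu : ∀ x, HasDerivAt u (v x) x)
    (hv : ∀ x, HasDerivAt v (2 * x * u x) x) (hv0 : v 0 ≠ 0) {r : ℝ} (hr : r ≤ 0)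
    (hur : u r = 0) : v r ≠ 0 := by
  have henergy : ∀ x, HasDerivAt (fun x ↦ v x ^ 2 - 2 * x * u x ^ 2) (-(2 * u x ^ 2)) x := by
    intro x
    have hlin : HasDerivAt (fun x : ℝ ↦ 2 * x) 2 x := by
      simpa using (hasDerivAt_id x).const_mul 2
    refine (((hv x).fun_pow 2).sub (hlin.mul ((hu x).fun_pow 2))).congr_deriv ?_
    push_cast
    ring
  have hanti : Antitone fun x ↦ v x ^ 2 - 2 * x * u x ^ 2 :=
    antitone_of_hasDerivAt_nonpos henergy fun x ↦ neg_nonpos.mpr (by positivity)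
  have hle : v 0 ^ 2 ≤ v r ^ 2 := by simpa [hur] using hanti hr
  exact sq_pos_iff.mp ((sq_pos_of_ne_zero hv0).trans_le hle)

theorem one_le_mul_sub_sq (hu : ∀ x, HasDerivAt u (v x) x)
    (hv : ∀ x, HasDerivAt v (2 * x * u x) x) (hv0 : v 0 ≠ 0) {a b : ℝ} (ha : 0 ≤ a) (hab : a < b)
    (hva : v (-a) = 0) (hvb : v (-b) = 0) : 1 ≤ 2 * b * (b - a) ^ 2 := by
  obtain ⟨r, hr, hr0⟩ := exists_hasDerivAt_eq_zero (neg_lt_neg hab)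
    (fun x _ ↦ (hv x).continuousAt.continuousWithinAt) (hvb.trans hva.symm) fun x _ ↦ hv x
  have hr_neg : r < 0 := hr.2.trans_le (neg_nonpos.mpr ha)
  have hur : u r = 0 := by simpa [hr_neg.ne] using hr0
  have hQ : ∀ x ∈ Icc (-b) (-a), |2 * x| ≤ 2 * b := fun x hx ↦
    abs_le.mpr ⟨by linarith [hx.1], by linarith [hx.2]⟩
  have hgap := one_le_mul_sub_sq_of_hasDerivAt (fun x _ ↦ hu x) (fun x _ ↦ hv x) hQ
    (Ioo_subset_Icc_self hr) (left_mem_Icc.mpr (neg_le_neg hab.le)) hur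
    (deriv_ne_zero_of_eq_zero hu hv hv0 hr_neg.le hur) hvb
  rwa [neg_sub_neg] at hgap

end Airy

lemma exists_mul_natCast_le_pow_three {δ : ℕ → ℝ} (hδ_pos : ∀ k, 0 < δ k) (hδ_mono : StrictMono δ)
    {Q : ℝ} (hgap : ∀ k, 1 ≤ Q * δ (k + 1) * (δ (k + 1) - δ k) ^ 2) :
    ∃ c > 0, ∀ k : ℕ, c * k ≤ δ k ^ 3 := by
  have hδ0 := hδ_pos 0
  have hQ : 0 < Q := by
    have hpos : 0 < Q * δ 1 * (δ 1 - δ 0) ^ 2 := one_pos.trans_le (hgap 0)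
    exact pos_of_mul_pos_left (pos_of_mul_pos_left hpos (sq_nonneg _)) (hδ_pos 1).le
  have hstep : ∀ k, √(δ 0 ^ 3 / Q) ≤ δ (k + 1) ^ 3 - δ k ^ 3 := by
    intro k
    have hk := hδ_pos k
    have hk1 := hδ_pos (k + 1)
    have hlt : 0 < δ (k + 1) - δ k := sub_pos.mpr (hδ_mono k.lt_succ_self)
    have hδ0_le : δ 0 ≤ δ (k + 1) := hδ_mono.monotone (Nat.zero_le _)
    calc √(δ 0 ^ 3 / Q) ≤ (δ (k + 1) - δ k) * δ (k + 1) ^ 2 := by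
          refine sqrt_le_iff.mpr ⟨by positivity, (div_le_iff₀ hQ).mpr ?_⟩
          calc δ 0 ^ 3 ≤ δ (k + 1) ^ 3 * 1 := by rw [mul_one]; gcongr
            _ ≤ δ (k + 1) ^ 3 * (Q * δ (k + 1) * (δ (k + 1) - δ k) ^ 2) := by gcongr; exact hgap k
            _ = ((δ (k + 1) - δ k) * δ (k + 1) ^ 2) ^ 2 * Q := by ring
      _ ≤ (δ (k + 1) - δ k) * (δ (k + 1) ^ 2 + (δ k * δ (k + 1) + δ k ^ 2)) := by
          gcongr
          exact le_add_of_nonneg_right (by positivity)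
      _ = δ (k + 1) ^ 3 - δ k ^ 3 := by ring
  refine ⟨√(δ 0 ^ 3 / Q), by positivity, fun k ↦ ?_⟩
  induction k with
  | zero => simpa using pow_nonneg (hδ_pos 0).le 3
  | succ k ih =>
    push_cast
    linarith [hstep k]

lemma summable_mul_exp_neg_of_mul_natCast_le {w a : ℕ → ℝ} {M c : ℝ} (hw : ∀ k, 0 ≤ w k)
    (hwM : ∀ k, w k ≤ M) (hc : 0 < c) (ha : ∀ k, c * k ≤ a k) {t : ℝ} (ht : 0 < t) :
    Summable fun k ↦ w k * exp (-(t * a k)) := by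
  have hgeom : Summable fun k : ℕ ↦ M * exp (k * -(t * c)) :=
    (summable_exp_nat_mul_iff.mpr (neg_neg_of_pos (mul_pos ht hc))).mul_left M
  refine hgeom.of_nonneg_of_le (fun k ↦ mul_nonneg (hw k) (exp_pos _).le) fun k ↦ ?_
  have hle : t * (c * k) ≤ t * a k := mul_le_mul_of_nonneg_left (ha k) ht.le
  exact mul_le_mul (hwM k) (exp_le_exp.mpr (by linarith)) (exp_pos _).le ((hw k).trans (hwM k))

theorem Airy.summable_mul_exp_neg_mul_pow_three {u v : ℝ → ℝ} (hu : ∀ x, HasDerivAt u (v x) x)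
    (hv : ∀ x, HasDerivAt v (2 * x * u x) x) (hv0 : v 0 ≠ 0) {δ : ℕ → ℝ} (hδ_pos : ∀ k, 0 < δ k)
    (hδ_mono : StrictMono δ) (hδ_zero : ∀ k, v (-(δ k)) = 0) {w : ℕ → ℝ} {M : ℝ}
    (hw : ∀ k, 0 ≤ w k) (hwM : ∀ k, w k ≤ M) {t : ℝ} (ht : 0 < t) :
    Summable fun k ↦ w k * exp (-(t * δ k ^ 3)) := by
  obtain ⟨c, hc, hcube⟩ := exists_mul_natCast_le_pow_three hδ_pos hδ_mono fun k ↦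
    one_le_mul_sub_sq hu hv hv0 (hδ_pos k).le (hδ_mono k.lt_succ_self) (hδ_zero k)
      (hδ_zero (k + 1))
  exact summable_mul_exp_neg_of_mul_natCast_le hw hwM hc hcube ht

theorem stmt19_general
    (u : ℝ → ℝ) (hu_smooth : ContDiff ℝ 2 u)
    (hu_ode : ∀ h : ℝ, deriv (deriv u) h = 2 * h * u h)
    (hu'_zero : deriv u 0 ≠ 0)
    (δ : ℕ → ℝ) (hδ_pos : ∀ k, 0 < δ k) (hδ_mono : StrictMono δ)
    (hδ_zero : ∀ k, deriv u (-(δ k)) = 0)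
    (p : ℕ → ℝ) (hp : ∀ k, p k = (deriv u 0) ^ 2 / 2 * ((δ k) ^ 4)⁻¹) :
    Tendsto (fun x : ℝ ↦ (x ^ 3)⁻¹ *
        log (∫ y in Ioi x, ∑' k : ℕ, p k * (δ k / 2) * mittagLeffler23 (δ k * |y|)))
      atTop (𝓝 (-(4 / 27) * (δ 0) ^ 3)) := by
  have hδ0_le (k : ℕ) : δ 0 ≤ δ k := hδ_mono.monotone k.zero_le
  have hweight (k : ℕ) : p k * (δ k / 2) = (deriv u 0) ^ 2 / 4 * (δ k ^ 3)⁻¹ := by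
    have := (hδ_pos k).ne'
    rw [hp]
    field_simp
    norm_num
  have hpos (k : ℕ) : 0 < p k * (δ k / 2) := by
    have := hδ_pos k
    rw [hweight]
    positivity
  have hbdd (k : ℕ) : p k * (δ k / 2) ≤ (deriv u 0) ^ 2 / 4 * (δ 0 ^ 3)⁻¹ := by
    have := hδ_pos 0
    rw [hweight]
    gcongr
    exact hδ0_le k
  have hu (x : ℝ) : HasDerivAt u (deriv u x) x :=
    (hu_smooth.differentiable two_ne_zero x).hasDerivAt
  have hu' (x : ℝ) : HasDerivAt (deriv u) (2 * x * u x) x :=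
    hu_ode x ▸ (hu_smooth.differentiable_deriv_two x).hasDerivAt
  have htail := hasExpDecay_mittagLeffler23.integral_Ioi_mixture three_ne_zero (by norm_num)
    mittagLeffler23.differentiable.continuous.measurable (fun k ↦ (hpos k).le) (hpos 0) (hδ_pos 0)
    hδ0_le fun t ↦ Airy.summable_mul_exp_neg_mul_pow_three hu hu' hu'_zero hδ_pos hδ_mono hδ_zero
      (fun k ↦ (hpos k).le) hbdd
  rw [neg_mul]
  refine (htail.congr' ?_).tendsto_log
  filter_upwards [eventually_gt_atTop 0] with x hx
  refine setIntegral_congr_fun measurableSet_Ioi fun y hy ↦ ?_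
  simp only [abs_of_pos (hx.trans hy)]

/-- tail asymptotics of the position of the TSRM:
`lim_{x→∞} x⁻³·log P(X(1) > x) = -(4/27)·(δ'₁)³`, where
`P(X(1) > x) = ∫_x^∞ ν₁(y) dy` with `ν₁(y) = ∑ₖ pₖ·(δₖ/2)·f_{2/3}(δₖ|y|)`.
Here `δ k` stands for `δ'_{k+1}` (so `δ 0 = δ'₁`), the zeros of `h ↦ u'(-h)` on `(0,∞)`,
and `pₖ = (u'(0)²/2)·δₖ⁻⁴`. -/
theorem stmt19
    (u : ℝ → ℝ) (hu_smooth : ContDiff ℝ 2 u)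
    (hu_ode : ∀ h : ℝ, deriv (deriv u) h = 2 * h * u h)
    (hu_zero : u 0 = 1)
    (hu'_zero : deriv u 0 = -((6:ℝ) ^ ((1:ℝ)/3) * Real.Gamma (2/3) / Real.Gamma (1/3)))
    (hu_pos : ∀ h : ℝ, 0 ≤ h → 0 < u h)
    (hu_anti : StrictAntiOn u (Ici 0))
    (hu_lim : Tendsto u atTop (𝓝 0))
    (δ : ℕ → ℝ) (hδ_pos : ∀ k, 0 < δ k) (hδ_mono : StrictMono δ)
    (hδ_zero : ∀ k, deriv u (-(δ k)) = 0)
    (hδ_all : ∀ x : ℝ, 0 < x → deriv u (-x) = 0 → ∃ k, δ k = x)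
    (p : ℕ → ℝ) (hp : ∀ k, p k = (deriv u 0) ^ 2 / 2 * ((δ k) ^ 4)⁻¹) :
    Tendsto (fun x : ℝ => (x ^ 3)⁻¹ *
        Real.log (∫ y in Ioi x, ∑' k : ℕ, p k * (δ k / 2) * mittagLeffler23 (δ k * |y|)))
      atTop (𝓝 (-(4/27) * (δ 0) ^ 3)) := by
  exact stmt19_general u hu_smooth hu_ode (hu'_zero.trans_ne (neg_ne_zero.mpr (by positivity)))
    δ hδ_pos hδ_mono hδ_zero p hp
end
end
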